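/- arXiv:1012.1103 — 3 statements merged into one kernel-verified Lean document; each statement's English description precedes it below -/
import Mathlib

section
/- Let (X,T) be a topological dynamical system and let K ⊆ X be a non-empty compact set. Then the Bowen topological entropy of K equals the supremum of the measure-theoretical lower entropies over all Borel probability measures giving K full measure: h^B_top(T,K) = sup { h̲_μ(T) : μ a Borel probability measure on X with μ(K) = 1 }. -/
/-!
The easy inequality `h̲_μ(T) ≤ h^B_top(T,K)` is the mass distribution principle
(`lowerEntropy_le_bowenEntropy`): if `h̲_μ(T) > s`, a non-null set of points has Bowen balls of
mass at most `exp (-s n)` for all large `n`, so no cover of `K` by Bowen balls can be cheap.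

The converse (`exists_le_lowerEntropy`) needs a probability measure on `K` with
`μ (B_n(x,ε)) ≤ C exp (-t n)` for all `x` and all `n ≥ N`. It exists by Hahn–Banach and the
Riesz–Markov–Kakutani theorem (`exists_measure_of_weights`) as soon as all *weighted* covers of `K`
have cost bounded away from `0`. Only finite weighted families enter, which suffices because
nothing but sublinearity of the minimal cost is used.

Weighted covers are compared with ordinary ones in `Mpre_le_wsum`: a weighted cover by balls of
radius `ε` costing `W` at exponent `t` yields an ordinary cover by balls of radius `2ε` costing at
most `W` at exponent `t + δ`. A point covered with weight at least `1` is covered with weight at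
least `exp (-δ n)` by the balls of some length `n`, and for fixed `n` a greedy choice of points
works (`exists_finset_of_weights`). Hence `M^s(K) = ∞` gives a Frostman measure for every exponent
below `s`.
-/

open Filter Set MeasureTheory Topology
open scoped ENNReal NNReal

section Core

variable {X : Type*} [MetricSpace X]

/-- The open Bowen ball `B_n(x, ε)` = `{y : d_n(x,y) < ε}` where
`d_n(x,y) = max_{0 ≤ k ≤ n-1} d(T^k x, T^k y)` is the `n`-th Bowen metric. -/
def bowenBall (T : X → X) (x : X) (n : ℕ) (ε : ℝ) : Set X :=
  {y | ∀ k < n, dist (T^[k] x) (T^[k] y) < ε}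

/-- The closed Bowen ball `B̄_n(x, ε)` = `{y : d_n(x,y) ≤ ε}`. -/
def bowenClosedBall (T : X → X) (x : X) (n : ℕ) (ε : ℝ) : Set X :=
  {y | ∀ k < n, dist (T^[k] x) (T^[k] y) ≤ ε}

/-- `M^s_{N,ε}(Z)`: infimum of `Σ_i exp (- s n_i)` over finite or countable families
of open Bowen balls `{B_{n_i}(x_i, ε)}` with `n_i ≥ N` covering `Z`. -/
noncomputable def Mpre (T : X → X) (s : ℝ) (N : ℕ) (ε : ℝ) (Z : Set X) : ℝ≥0∞ :=
  ⨅ (I : Set ℕ) (x : ℕ → X) (n : ℕ → ℕ) (_ : ∀ i ∈ I, N ≤ n i)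
    (_ : Z ⊆ ⋃ i ∈ I, bowenBall T (x i) (n i) ε),
    ∑' i : I, ENNReal.ofReal (Real.exp (-s * n i))

/-- `M^s_ε(Z) = lim_{N → ∞} M^s_{N,ε}(Z)` (the quantity is nondecreasing in `N`). -/
noncomputable def MpreEps (T : X → X) (s : ℝ) (ε : ℝ) (Z : Set X) : ℝ≥0∞ :=
  ⨆ N : ℕ, Mpre T s N ε Z

/-- `M^s(Z) = lim_{ε → 0} M^s_ε(Z)` (the quantity is nondecreasing as `ε` decreases). -/
noncomputable def Mtop (T : X → X) (s : ℝ) (Z : Set X) : ℝ≥0∞ :=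
  ⨆ (ε : ℝ) (_ : 0 < ε), MpreEps T s ε Z

/-- Bowen's topological entropy `h^B_top(T,Z)`: the critical value of `s` at which
`M^s(Z)` jumps from `∞` to `0`. -/
noncomputable def bowenEntropy (T : X → X) (Z : Set X) : ℝ≥0∞ :=
  ⨆ (s : ℝ) (_ : Mtop T s Z = ∞), ENNReal.ofReal s

/-- `P^s_{N,ε}(Z)`: suprema of `Σ_i exp (- s n_i)` over finite or countable pairwise
disjoint families of closed Bowen balls `{B̄_{n_i}(x_i, ε)}` with `x_i ∈ Z`, `n_i ≥ N`. -/
noncomputable def Ppre (T : X → X) (s : ℝ) (N : ℕ) (ε : ℝ) (Z : Set X) : ℝ≥0∞ :=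
  ⨆ (I : Set ℕ) (x : ℕ → X) (n : ℕ → ℕ) (_ : ∀ i ∈ I, x i ∈ Z ∧ N ≤ n i)
    (_ : ∀ i ∈ I, ∀ j ∈ I, i ≠ j →
      Disjoint (bowenClosedBall T (x i) (n i) ε) (bowenClosedBall T (x j) (n j) ε)),
    ∑' i : I, ENNReal.ofReal (Real.exp (-s * n i))

/-- `P^s_ε(Z) = lim_{N → ∞} P^s_{N,ε}(Z)` (the quantity is nonincreasing in `N`). -/
noncomputable def PpreEps (T : X → X) (s : ℝ) (ε : ℝ) (Z : Set X) : ℝ≥0∞ :=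
  ⨅ N : ℕ, Ppre T s N ε Z

/-- `𝒫^s_ε(Z) = inf { Σ_{i} P^s_ε(Z_i) : ⋃_i Z_i ⊇ Z }`. -/
noncomputable def Pouter (T : X → X) (s : ℝ) (ε : ℝ) (Z : Set X) : ℝ≥0∞ :=
  ⨅ (Zs : ℕ → Set X) (_ : Z ⊆ ⋃ i, Zs i), ∑' i, PpreEps T s ε (Zs i)

/-- `h^P_top(T,Z,ε)`: the critical value of `s` at which `𝒫^s_ε(Z)` jumps from `∞` to `0`. -/
noncomputable def packEntropyEps (T : X → X) (ε : ℝ) (Z : Set X) : ℝ≥0∞ :=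
  ⨆ (s : ℝ) (_ : Pouter T s ε Z = ∞), ENNReal.ofReal s

/-- The packing topological entropy `h^P_top(T,Z) = lim_{ε → 0} h^P_top(T,Z,ε)`
(the quantity is nondecreasing as `ε` decreases). -/
noncomputable def packEntropy (T : X → X) (Z : Set X) : ℝ≥0∞ :=
  ⨆ (ε : ℝ) (_ : 0 < ε), packEntropyEps T ε Z

/-- `r_n(Z,ε)`: the largest cardinality of an `(n,ε)`-separated subset of `Z`,
i.e. a set in which distinct points `x, y` satisfy `d_n(x,y) > ε`. -/
noncomputable def maxSep (T : X → X) (Z : Set X) (n : ℕ) (ε : ℝ) : ℝ≥0∞ :=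
  ⨆ (E : Finset X) (_ : ↑E ⊆ Z ∧
    ∀ x ∈ E, ∀ y ∈ E, x ≠ y → ∃ k < n, ε < dist (T^[k] x) (T^[k] y)),
    (E.card : ℝ≥0∞)

/-- Logarithm on `ℝ≥0∞` (with `elog ∞ = ∞`), used for counting quantities. -/
noncomputable def elog (x : ℝ≥0∞) : ℝ≥0∞ :=
  if x = ∞ then ∞ else ENNReal.ofReal (Real.log x.toReal)

/-- The upper capacity topological entropy
`h^{UC}_top(T,Z) = lim_{ε → 0} limsup_{n → ∞} (1/n) log r_n(Z,ε)`. -/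
noncomputable def upcapEntropy (T : X → X) (Z : Set X) : ℝ≥0∞ :=
  ⨆ (ε : ℝ) (_ : 0 < ε), Filter.limsup (fun n : ℕ => elog (maxSep T Z n ε) / n) Filter.atTop

/-- `- log x` as a function `ℝ≥0∞ → ℝ≥0∞` (with `negLog 0 = ∞`), used for measures of balls. -/
noncomputable def negLog (x : ℝ≥0∞) : ℝ≥0∞ :=
  if x = 0 then ∞ else ENNReal.ofReal (-Real.log x.toReal)

variable [MeasurableSpace X]

/-- The lower local entropy `h̲_μ(T,x) = lim_{ε→0} liminf_{n→∞} -(1/n) log μ(B_n(x,ε))`. -/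
noncomputable def lowerLocalEntropy (T : X → X) (μ : Measure X) (x : X) : ℝ≥0∞ :=
  ⨆ (ε : ℝ) (_ : 0 < ε),
    Filter.liminf (fun n : ℕ => negLog (μ (bowenBall T x n ε)) / n) Filter.atTop

/-- The upper local entropy `h̄_μ(T,x) = lim_{ε→0} limsup_{n→∞} -(1/n) log μ(B_n(x,ε))`. -/
noncomputable def upperLocalEntropy (T : X → X) (μ : Measure X) (x : X) : ℝ≥0∞ :=
  ⨆ (ε : ℝ) (_ : 0 < ε),
    Filter.limsup (fun n : ℕ => negLog (μ (bowenBall T x n ε)) / n) Filter.atTop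

/-- The measure-theoretical lower entropy `h̲_μ(T) = ∫ h̲_μ(T,x) dμ(x)`. -/
noncomputable def lowerEntropy (T : X → X) (μ : Measure X) : ℝ≥0∞ :=
  ∫⁻ x, lowerLocalEntropy T μ x ∂μ

/-- The measure-theoretical upper entropy `h̄_μ(T) = ∫ h̄_μ(T,x) dμ(x)`. -/
noncomputable def upperEntropy (T : X → X) (μ : Measure X) : ℝ≥0∞ :=
  ∫⁻ x, upperLocalEntropy T μ x ∂μ

end Core

/-! ### Weighted covers and the Frostman measure -/

/-- The linear functional `∑ i, c i * w i` of a finitely supported nonnegative weight `c`.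
With `w i` a cost it is the total cost of the weighted family `c`; with `w i` the value at `x`
of the indicator function of `U i` it is the total weight that `c` puts on `x`. -/
noncomputable def wsum {ι : Type*} (w : ι → ℝ) (c : ι →₀ ℝ≥0) : ℝ :=
  c.sum fun i a => (a : ℝ) * w i

section wsum

variable {ι : Type*} (w : ι → ℝ)

lemma wsum_zero : wsum w 0 = 0 := by simp [wsum]

lemma wsum_add (c d : ι →₀ ℝ≥0) : wsum w (c + d) = wsum w c + wsum w d := by
  classical
  unfold wsum
  rw [Finsupp.sum_add_index']
  · simp
  · intro i a b
    push_cast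
    ring

lemma wsum_smul (t : ℝ≥0) (c : ι →₀ ℝ≥0) : wsum w (t • c) = t * wsum w c := by
  unfold wsum
  rw [Finsupp.sum_smul_index' (by simp)]
  simp only [Finsupp.sum, Finset.mul_sum, smul_eq_mul, NNReal.coe_mul, mul_assoc]

lemma wsum_single (i : ι) (a : ℝ≥0) : wsum w (Finsupp.single i a) = a * w i := by
  simp [wsum]

lemma wsum_nonneg (hw : ∀ i, 0 ≤ w i) (c : ι →₀ ℝ≥0) : 0 ≤ wsum w c :=
  Finset.sum_nonneg fun i _ => mul_nonneg (c i).coe_nonneg (hw i)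

end wsum

open CompactlySupported in
/-- A Frostman lemma. If every weighted family of the open sets `U i` that covers `K` has total
cost at least `1`, then some probability measure on `K` gives each `U i` mass at most its cost.
The minimal cost of a weighted family dominating `f` on `K` is a sublinear functional of the
continuous function `f`. Hahn–Banach gives a linear functional below it taking the constant `1` to
`1`; it is positive, and the measure is the one representing it. -/
theorem exists_measure_of_weights {X : Type*} [MetricSpace X] [CompactSpace X] [MeasurableSpace X]
    [BorelSpace X] {ι : Type*} (U : ι → Set X) (hU : ∀ i, IsOpen (U i)) (w : ι → ℝ)
    (hw : ∀ i, 0 ≤ w i) (K : Set X) (hK : IsClosed K)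
    (hcov : ∃ F : Finset ι, ∀ x, ∃ i ∈ F, x ∈ U i)
    (hmain : ∀ c : ι →₀ ℝ≥0,
      (∀ x ∈ K, 1 ≤ wsum (fun i => (U i).indicator 1 x) c) → 1 ≤ wsum w c) :
    ∃ μ : Measure X, IsProbabilityMeasure μ ∧ μ K = 1 ∧ ∀ i, μ (U i) ≤ ENNReal.ofReal (w i) := by
  classical
  have hKne : K.Nonempty := by
    by_contra h
    rw [not_nonempty_iff_eq_empty] at h
    have := hmain 0 (by simp [h])
    rw [wsum_zero] at this
    linarith
  have hind : ∀ x i, 0 ≤ (U i).indicator (1 : X → ℝ) x := fun x i =>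
    indicator_nonneg (fun _ _ => zero_le_one) x
  -- `D f` is the set of weights dominating `f` on `K`, and `p f` the minimal cost of such a weight.
  let D (f : C_c(X, ℝ)) : Set (ι →₀ ℝ≥0) :=
    {c | ∀ x ∈ K, f x ≤ wsum (fun i => (U i).indicator 1 x) c}
  let p (f : C_c(X, ℝ)) : ℝ := sInf (wsum w '' D f)
  have hbdd : ∀ f, BddBelow (wsum w '' D f) := by
    rintro f
    refine ⟨0, ?_⟩
    rintro _ ⟨c, -, rfl⟩
    exact wsum_nonneg w hw c
  have hple : ∀ f c, c ∈ D f → p f ≤ wsum w c := fun f c hc =>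
    csInf_le (hbdd f) ⟨c, hc, rfl⟩
  have hDne : ∀ f, (wsum w '' D f).Nonempty := by
    intro f
    obtain ⟨F, hF⟩ := hcov
    obtain ⟨M, hM⟩ := (isCompact_univ.image (map_continuous f)).bddAbove
    refine Nonempty.image _ ⟨∑ i ∈ F, Finsupp.single i M.toNNReal, ?_⟩
    intro x _
    obtain ⟨i, hi, hxi⟩ := hF x
    have h1 : f x ≤ M := hM ⟨x, mem_univ x, rfl⟩
    have h2 : M ≤ (M.toNNReal : ℝ) := Real.le_coe_toNNReal M
    rw [← Finset.add_sum_erase F _ hi, wsum_add, wsum_single, indicator_of_mem hxi]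
    have h3 := wsum_nonneg _ (hind x) (∑ j ∈ F.erase i, Finsupp.single j M.toNNReal)
    simp only [Pi.one_apply, mul_one]
    linarith
  have hlep : ∀ f a, (∀ c ∈ D f, a ≤ wsum w c) → a ≤ p f := by
    intro f a h
    apply le_csInf (hDne f)
    rintro _ ⟨c, hc, rfl⟩
    exact h c hc
  have hp0 : ∀ f, 0 ≤ p f := fun f => hlep f 0 fun c _ => wsum_nonneg w hw c
  have hscale : ∀ (t : ℝ) (ht : 0 < t) (f : C_c(X, ℝ)) c, c ∈ D f →
      (NNReal.mk t ht.le) • c ∈ D (t • f) := by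
    intro t ht f c hc x hx
    rw [wsum_smul]
    exact mul_le_mul_of_nonneg_left (hc x hx) ht.le
  have hhom1 : ∀ t : ℝ, 0 < t → ∀ f, p (t • f) ≤ t * p f := by
    intro t ht f
    rw [← div_le_iff₀' ht]
    refine hlep f _ fun c hc => ?_
    rw [div_le_iff₀' ht]
    have := hple _ _ (hscale t ht f c hc)
    rwa [wsum_smul] at this
  have hhom : ∀ t : ℝ, 0 < t → ∀ f, p (t • f) = t * p f := by
    intro t ht f
    refine le_antisymm (hhom1 t ht f) ?_
    have := hhom1 t⁻¹ (inv_pos.2 ht) (t • f)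
    rw [inv_smul_smul₀ ht.ne', ← div_eq_inv_mul, le_div_iff₀' ht] at this
    exact this
  have hadd : ∀ f g, p (f + g) ≤ p f + p g := by
    intro f g
    rw [← sub_le_iff_le_add]
    refine hlep f _ fun c hc => ?_
    rw [sub_le_comm]
    refine hlep g _ fun d hd => ?_
    rw [sub_le_iff_le_add', ← wsum_add]
    refine hple _ _ fun x hx => ?_
    rw [wsum_add]
    exact add_le_add (hc x hx) (hd x hx)
  let mk (f : X → ℝ) (hf : Continuous f) : C_c(X, ℝ) :=
    { toFun := f
      continuous_toFun := hf
      hasCompactSupport' := HasCompactSupport.of_compactSpace _ }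
  let e : C_c(X, ℝ) := mk (fun _ => 1) continuous_const
  have hpe : 1 ≤ p e := hlep e 1 fun c hc => hmain c hc
  obtain ⟨x₀, hx₀⟩ := hKne
  have he : ∀ t : ℝ, t • e = 0 → RingHom.id ℝ t • (1 : ℝ) = 0 := by
    intro t ht
    have := DFunLike.congr_fun ht x₀
    simpa [e, mk] using this
  obtain ⟨L, hL1, hLp⟩ := exists_extension_of_le_sublinear
    (LinearPMap.mkSpanSingleton' e (1 : ℝ) he) p hhom hadd (by
      rintro ⟨y, hy⟩
      obtain ⟨t, rfl⟩ := Submodule.mem_span_singleton.1 hy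
      rw [LinearPMap.mkSpanSingleton'_apply]
      simp only [RingHom.id_apply, smul_eq_mul, mul_one]
      rcases le_or_gt t 0 with ht | ht
      · exact ht.trans (hp0 _)
      · rw [hhom t ht]
        nlinarith)
  have hLe : L e = 1 := by
    have h := hL1 ⟨e, Submodule.mem_span_singleton_self e⟩
    exact h.trans (LinearPMap.mkSpanSingleton'_apply_self e (1 : ℝ) he _)
  have hneg : ∀ f : C_c(X, ℝ), (∀ x ∈ K, f x ≤ 0) → L f ≤ 0 := by
    intro f hf
    refine (hLp f).trans ?_
    rw [← wsum_zero w]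
    refine hple _ _ fun x hx => ?_
    rw [wsum_zero]
    exact hf x hx
  let Λ : C_c(X, ℝ) →ₚ[ℝ] ℝ := PositiveLinearMap.mk₀ L (by
    intro f hf
    have h := hneg (-f) (fun x _ => by simpa using hf x)
    simpa using h)
  have hint : ∀ f : C_c(X, ℝ), ∫ x, f x ∂(RealRMK.rieszMeasure Λ) = L f :=
    fun f => RealRMK.integral_rieszMeasure Λ f
  set μ := RealRMK.rieszMeasure Λ with hμ
  have hprob : IsProbabilityMeasure μ := by
    have h := hint e
    rw [hLe] at h
    simp only [e, mk, CompactlySupportedContinuousMap.coe_mk, ContinuousMap.coe_mk, integral_const,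
      smul_eq_mul, mul_one] at h
    exact isProbabilityMeasure_iff_real.2 h
  refine ⟨μ, hprob, ?_, ?_⟩
  -- The distance to `K` vanishes on `K`, so it integrates to `0`: the measure is carried by `K`.
  · let f := mk (fun x => Metric.infDist x K) (Metric.continuous_infDist_pt K)
    have hf0 : ∀ x ∈ K, f x = 0 := fun x hx => Metric.infDist_zero_of_mem hx
    have hLf : L f = 0 := by
      apply le_antisymm (hneg f fun x hx => (hf0 x hx).le)
      have := hneg (-f) fun x hx => by simp [hf0 x hx]
      simpa using this
    have h := hint f
    have hfnn : 0 ≤ (f : X → ℝ) := fun x => Metric.infDist_nonneg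
    rw [hLf, integral_eq_zero_iff_of_nonneg hfnn
      ((map_continuous f).integrable_of_hasCompactSupport f.hasCompactSupport)] at h
    rw [prob_compl_eq_zero_iff hK.measurableSet |>.symm]
    have h0 : μ {x | ¬ f x = 0} = 0 := ae_iff.1 h
    have hsub : Kᶜ ⊆ {x | ¬ f x = 0} := fun x hx hx0 =>
      hx ((hK.mem_iff_infDist_zero ⟨x₀, hx₀⟩).2 hx0)
    exact measure_mono_null hsub h0
  -- Functions supported in `U i` with values in `[0, 1]` are dominated by weight `1` on `U i` alone.
  · intro i
    rw [(hU i).measure_eq_iSup_isCompact μ]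
    refine iSup₂_le fun C hC => iSup_le fun hCc => ?_
    obtain ⟨g, hg1, hg0, -, hg01⟩ := exists_continuous_one_zero_of_isCompact hCc
      (hU i).isClosed_compl (disjoint_compl_right_iff_subset.2 hC)
    let f := mk g g.continuous
    have hLf : L f ≤ w i := by
      have h : p f ≤ wsum w (Finsupp.single i 1) := by
        refine hple _ _ fun x hx => ?_
        rw [wsum_single]
        by_cases hxi : x ∈ U i
        · simp only [NNReal.coe_one, indicator_of_mem hxi, Pi.one_apply, mul_one]
          exact (hg01 x).2
        · simp only [indicator_of_notMem hxi, mul_zero]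
          exact (hg0 hxi).le
      rw [wsum_single] at h
      simpa using (hLp f).trans h
    have hfi : Integrable f μ :=
      (map_continuous f).integrable_of_hasCompactSupport f.hasCompactSupport
    rw [← hint f] at hLf
    calc μ C = ∫⁻ x, C.indicator 1 x ∂μ := by rw [lintegral_indicator_one hCc.measurableSet]
      _ ≤ ∫⁻ x, ENNReal.ofReal (f x) ∂μ := by
        refine lintegral_mono fun x => ?_
        by_cases hx : x ∈ C
        · have : f x = 1 := hg1 hx
          simp [hx, this]
        · simp [hx]
      _ = ENNReal.ofReal (∫ x, f x ∂μ) :=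
        (ofReal_integral_eq_lintegral_ofReal hfi (ae_of_all _ fun x => (hg01 x).1)).symm
      _ ≤ ENNReal.ofReal (w i) := ENNReal.ofReal_le_ofReal hLf

/-! ### Bowen balls and the outer quantities -/

section Bowen

variable {X : Type*} [MetricSpace X] {T : X → X}

lemma isOpen_bowenBall (hT : Continuous T) (x : X) (n : ℕ) (ε : ℝ) :
    IsOpen (bowenBall T x n ε) := by
  have h : bowenBall T x n ε = ⋂ k ∈ Iio n, {y | dist (T^[k] x) (T^[k] y) < ε} := by
    ext y
    simp [bowenBall]
  rw [h]
  exact (finite_Iio n).isOpen_biInter fun k _ =>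
    isOpen_lt (continuous_const.dist (hT.iterate k)) continuous_const

lemma mem_bowenBall_self (x : X) (n : ℕ) {ε : ℝ} (hε : 0 < ε) : x ∈ bowenBall T x n ε :=
  fun k _ => by simpa using hε

lemma mem_bowenBall_two_mul {x y z : X} {n : ℕ} {ε : ℝ} (hy : y ∈ bowenBall T x n ε)
    (hz : z ∈ bowenBall T x n ε) : z ∈ bowenBall T y n (2 * ε) := by
  intro k hk
  have h1 := hy k hk
  have h2 := hz k hk
  have h3 := dist_triangle_left (T^[k] y) (T^[k] z) (T^[k] x)
  linarith

lemma Mpre_le {s : ℝ} {N : ℕ} {ε : ℝ} {Z : Set X} (I : Set ℕ) (x : ℕ → X) (n : ℕ → ℕ)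
    (hn : ∀ i ∈ I, N ≤ n i) (hc : Z ⊆ ⋃ i ∈ I, bowenBall T (x i) (n i) ε) :
    Mpre T s N ε Z ≤ ∑' i : I, ENNReal.ofReal (Real.exp (-s * n i)) :=
  iInf_le_of_le I <| iInf_le_of_le x <| iInf_le_of_le n <| iInf_le_of_le hn <|
    iInf_le_of_le hc le_rfl

lemma Mpre_mono_N (s : ℝ) {N N' : ℕ} (h : N ≤ N') (ε : ℝ) (Z : Set X) :
    Mpre T s N ε Z ≤ Mpre T s N' ε Z := by
  conv_rhs => unfold Mpre
  refine le_iInf fun I => le_iInf fun x => le_iInf fun n => le_iInf fun hn => le_iInf fun hc => ?_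
  exact Mpre_le I x n (fun i hi => h.trans (hn i hi)) hc

/-- A finite family of Bowen balls, with any index type, is admissible in `Mpre`. -/
lemma Mpre_le_finset {ι : Type*} (F : Finset ι) (x : ι → X) (n : ι → ℕ) (s : ℝ) (N : ℕ) (ε : ℝ)
    {Z : Set X} (hZ : Z.Nonempty) (hn : ∀ i ∈ F, N ≤ n i)
    (hc : ∀ z ∈ Z, ∃ i ∈ F, z ∈ bowenBall T (x i) (n i) ε) :
    Mpre T s N ε Z ≤ ∑ i ∈ F, ENNReal.ofReal (Real.exp (-s * n i)) := by
  obtain ⟨z₀, hz₀⟩ := hZ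
  obtain ⟨i₀, hi₀, -⟩ := hc z₀ hz₀
  let e := F.equivFin
  let g : ℕ → ι := fun j => if h : j < F.card then (e.symm ⟨j, h⟩ : ι) else i₀
  have hg : ∀ j : Fin F.card, g j = e.symm j := fun j => by simp [g]
  refine (Mpre_le (Iio F.card) (x ∘ g) (n ∘ g) ?_ ?_).trans ?_
  · intro j hj
    have := hg ⟨j, hj⟩
    simp only [Function.comp_apply]
    rw [show g j = _ from this]
    exact hn _ (e.symm _).2
  · intro z hz
    obtain ⟨i, hi, hzi⟩ := hc z hz
    have h1 : g (e ⟨i, hi⟩) = i := by rw [hg]; simp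
    refine mem_iUnion₂.2 ⟨e ⟨i, hi⟩, (e ⟨i, hi⟩).2, ?_⟩
    simpa only [Function.comp_apply, h1] using hzi
  · have h1 : (∑' j : Iio F.card, ENNReal.ofReal (Real.exp (-s * ((n ∘ g) j : ℕ)))) =
        ∑' j : Fin F.card, ENNReal.ofReal (Real.exp (-s * (n (e.symm j) : ℕ))) := by
      refine ((Fin.equivSubtype (n := F.card)).tsum_eq (fun j : Iio F.card =>
        ENNReal.ofReal (Real.exp (-s * ((n ∘ g) j : ℕ))))).symm.trans (tsum_congr fun j => ?_)
      rw [← hg]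
      rfl
    rw [h1, e.symm.tsum_eq (fun i : F => ENNReal.ofReal (Real.exp (-s * (n i : ℕ)))), tsum_fintype,
      Finset.sum_coe_sort F (fun i => ENNReal.ofReal (Real.exp (-s * (n i : ℕ))))]

lemma exp_mul_Mpre_le {s s' : ℝ} (h : s' ≤ s) (N : ℕ) (ε : ℝ) (Z : Set X) :
    ENNReal.ofReal (Real.exp ((s - s') * N)) * Mpre T s N ε Z ≤ Mpre T s' N ε Z := by
  conv_rhs => unfold Mpre
  refine le_iInf fun I => le_iInf fun x => le_iInf fun n => le_iInf fun hn => le_iInf fun hc => ?_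
  refine (mul_le_mul_right (Mpre_le I x n hn hc) _).trans ?_
  rw [← ENNReal.tsum_mul_left]
  refine ENNReal.tsum_le_tsum fun i => ?_
  rw [← ENNReal.ofReal_mul (Real.exp_nonneg _), ← Real.exp_add]
  refine ENNReal.ofReal_le_ofReal (Real.exp_le_exp.2 ?_)
  have h2 : (N : ℝ) ≤ n i := by exact_mod_cast hn i i.2
  nlinarith

lemma MpreEps_eq_top {s s' : ℝ} (h : s' < s) {N : ℕ} {ε : ℝ} {Z : Set X}
    (hM : Mpre T s N ε Z ≠ 0) : MpreEps T s' ε Z = ∞ := by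
  have h1 : Tendsto (fun n : ℕ => ENNReal.ofReal (Real.exp ((s - s') * n))) atTop (𝓝 ∞) := by
    refine ENNReal.tendsto_ofReal_atTop.comp (Real.tendsto_exp_atTop.comp ?_)
    exact tendsto_natCast_atTop_atTop.const_mul_atTop (sub_pos.2 h)
  have h2 := ENNReal.Tendsto.mul_const (b := Mpre T s N ε Z) h1 (Or.inl ENNReal.top_ne_zero)
  rw [ENNReal.top_mul hM] at h2
  rw [eq_top_iff]
  refine le_of_tendsto h2 ?_
  filter_upwards [eventually_ge_atTop N] with n hn
  exact (mul_le_mul_right (Mpre_mono_N s hn ε Z) _).trans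
    ((exp_mul_Mpre_le h.le n ε Z).trans (le_iSup (fun n => Mpre T s' n ε Z) n))

lemma ofReal_le_bowenEntropy {s : ℝ} {N : ℕ} {ε : ℝ} (hε : 0 < ε) {Z : Set X}
    (hM : Mpre T s N ε Z ≠ 0) {s' : ℝ} (h : s' < s) :
    ENNReal.ofReal s' ≤ bowenEntropy T Z := by
  have h1 : Mtop T s' Z = ∞ := by
    rw [eq_top_iff, ← MpreEps_eq_top h hM]
    exact le_iSup₂ (f := fun (ε : ℝ) (_ : 0 < ε) => MpreEps T s' ε Z) ε hε
  exact le_iSup₂ (f := fun (s : ℝ) (_ : Mtop T s Z = ∞) => ENNReal.ofReal s) s' h1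

/-! ### From weighted covers to covers -/

/-- If the weights `c i`, `i ∈ J`, put total mass at least `a` on every point of `A`, then there
are at most `(∑ c i) / a` points such that every point of `A` shares some `U i` with one of them.
Points are chosen greedily: a point `x` uses up all the sets containing it, whose total weight is
at least `a`, and the points of `A` left over lie in none of these sets. -/
lemma exists_finset_of_weights {α ι : Type*} (U : ι → Set α) (c : ι → ℝ) (hc : ∀ i, 0 ≤ c i)
    {a : ℝ} (ha : 0 < a) (J : Finset ι) : ∀ A : Set α,
    (∀ x ∈ A, a ≤ ∑ i ∈ J, c i * (U i).indicator 1 x) →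
    ∃ E : Finset α, E.card * a ≤ ∑ i ∈ J, c i ∧ ∀ x ∈ A, ∃ y ∈ E, ∃ i ∈ J, x ∈ U i ∧ y ∈ U i := by
  classical
  induction J using Finset.strongInduction with
  | H J ih =>
  intro A hA
  rcases A.eq_empty_or_nonempty with rfl | ⟨x, hx⟩
  · exact ⟨∅, by simpa using Finset.sum_nonneg fun i _ => hc i, by simp⟩
  have hin : a ≤ ∑ i ∈ J with x ∈ U i, c i := by
    refine (hA x hx).trans (le_of_eq ?_)
    rw [Finset.sum_filter]
    refine Finset.sum_congr rfl fun i _ => ?_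
    by_cases h : x ∈ U i <;> simp [h]
  have hss : J.filter (fun i => x ∉ U i) ⊂ J := by
    obtain ⟨i, hi⟩ : (J.filter (fun i => x ∈ U i)).Nonempty := by
      by_contra h
      rw [Finset.not_nonempty_iff_eq_empty] at h
      rw [h, Finset.sum_empty] at hin
      linarith
    rw [Finset.mem_filter] at hi
    exact Finset.filter_ssubset.2 ⟨i, hi.1, not_not.2 hi.2⟩
  obtain ⟨E, hE, hEA⟩ := ih _ hss {z ∈ A | ∀ i ∈ J, x ∈ U i → z ∉ U i} (by
    rintro z ⟨hz, hzx⟩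
    refine (hA z hz).trans (le_of_eq ?_)
    rw [Finset.sum_filter]
    refine Finset.sum_congr rfl fun i hi => ?_
    by_cases h : x ∈ U i
    · simp [h, hzx i hi h]
    · simp [h])
  refine ⟨insert x E, ?_, ?_⟩
  · have h1 : ((insert x E).card : ℝ) ≤ E.card + 1 := by exact_mod_cast Finset.card_insert_le x E
    rw [← Finset.sum_filter_add_sum_filter_not J (fun i => x ∈ U i)]
    nlinarith
  · intro z hz
    by_cases h : ∀ i ∈ J, x ∈ U i → z ∉ U i
    · obtain ⟨y, hy, i, hi, h1⟩ := hEA z ⟨hz, h⟩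
      exact ⟨y, Finset.mem_insert_of_mem hy, i, (Finset.mem_filter.1 hi).1, h1⟩
    · push Not at h
      obtain ⟨i, hi, h1, h2⟩ := h
      exact ⟨x, Finset.mem_insert_self x E, i, hi, h2, h1⟩

/-- A weighted cover by Bowen balls can be replaced by an honest cover, at the price of doubling
the radius and of a loss `δ` in the exponent. Since `∑_{n ≥ N} exp (-δ n) < 1`, each point `x` has
a level `n` at which the balls of length `n` put weight at least `exp (-δ n)` on `x`; at each
level, balls of length `n` are balls of a single metric, and `exists_finset_of_weights` applies. -/
lemma Mpre_le_wsum {K : Set X} (hKne : K.Nonempty) (s δ ε : ℝ) (N : ℕ)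
    (hN : ∀ G : Finset ℕ, (∀ n ∈ G, N ≤ n) → ∑ n ∈ G, Real.exp (-δ * n) < 1)
    (c : {p : X × ℕ // N ≤ p.2} →₀ ℝ≥0)
    (hc : ∀ x ∈ K, 1 ≤ wsum (fun p => (bowenBall T p.1.1 p.1.2 ε).indicator 1 x) c) :
    Mpre T (s + δ) N (2 * ε) K ≤ ENNReal.ofReal (wsum (fun p => Real.exp (-s * p.1.2)) c) := by
  classical
  let U : {p : X × ℕ // N ≤ p.2} → Set X := fun p => bowenBall T p.1.1 p.1.2 ε
  let J : ℕ → Finset {p : X × ℕ // N ≤ p.2} := fun n => c.support.filter fun p => p.1.2 = n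
  let G : Finset ℕ := c.support.image fun p => p.1.2
  have hGN : ∀ n ∈ G, N ≤ n := by
    intro n hn
    obtain ⟨p, -, rfl⟩ := Finset.mem_image.1 hn
    exact p.2
  have hfib : ∀ f : {p : X × ℕ // N ≤ p.2} → ℝ,
      ∑ n ∈ G, ∑ p ∈ J n, f p = ∑ p ∈ c.support, f p := fun f =>
    Finset.sum_fiberwise_of_maps_to (fun p hp => Finset.mem_image_of_mem _ hp) f
  let A : ℕ → Set X := fun n =>
    {x | Real.exp (-δ * n) ≤ ∑ p ∈ J n, (c p : ℝ) * (U p).indicator 1 x}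
  have hA : ∀ x ∈ K, ∃ n ∈ G, x ∈ A n := by
    intro x hx
    by_contra! h
    have h1 := hc x hx
    have h2 : ∑ p ∈ c.support, (c p : ℝ) * (U p).indicator 1 x ≤ ∑ n ∈ G, Real.exp (-δ * n) := by
      rw [← hfib]
      exact Finset.sum_le_sum fun n hn => (not_le.1 (h n hn)).le
    have h3 := hN G hGN
    exact absurd (h1.trans h2) (not_le.2 h3)
  have hE := fun n : ℕ => exists_finset_of_weights U (fun p => (c p : ℝ)) (fun p => (c p).coe_nonneg)
    (Real.exp_pos (-δ * n)) (J n) (A n) (fun x hx => hx)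
  choose E hEcard hEcov using hE
  refine (Mpre_le_finset (G.sigma E) (fun q => q.2) (fun q => q.1) (s + δ) N (2 * ε) hKne
    (fun q hq => hGN _ (Finset.mem_sigma.1 hq).1) ?_).trans ?_
  · intro z hz
    obtain ⟨n, hn, hzn⟩ := hA z hz
    obtain ⟨y, hy, p, hp, hzp, hyp⟩ := hEcov n z hzn
    refine ⟨⟨n, y⟩, Finset.mem_sigma.2 ⟨hn, hy⟩, ?_⟩
    have hpn : p.1.2 = n := (Finset.mem_filter.1 hp).2
    have := mem_bowenBall_two_mul hyp hzp
    rwa [hpn] at this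
  · rw [← ENNReal.ofReal_sum_of_nonneg (fun q _ => Real.exp_nonneg _), Finset.sum_sigma]
    refine ENNReal.ofReal_le_ofReal ?_
    unfold wsum Finsupp.sum
    rw [← hfib]
    refine Finset.sum_le_sum fun n _ => ?_
    have h1 : ∑ p ∈ J n, (c p : ℝ) * Real.exp (-s * p.1.2) =
        (∑ p ∈ J n, (c p : ℝ)) * Real.exp (-s * n) := by
      rw [Finset.sum_mul]
      refine Finset.sum_congr rfl fun p hp => ?_
      rw [(Finset.mem_filter.1 hp).2]
    have h2 : Real.exp (-(s + δ) * n) = Real.exp (-δ * n) * Real.exp (-s * n) := by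
      rw [← Real.exp_add]
      ring_nf
    simp only
    rw [h1, Finset.sum_const, nsmul_eq_mul, h2, ← mul_assoc]
    exact mul_le_mul_of_nonneg_right (hEcard n) (Real.exp_nonneg _)

/-! ### Local entropies -/

lemma le_exp_of_lt_negLog_div {m : ℝ≥0∞} (hm : m ≤ 1) {s : ℝ≥0} {n : ℕ} (hn : 0 < n)
    (h : (s : ℝ≥0∞) < negLog m / n) : m ≤ ENNReal.ofReal (Real.exp (-s * n)) := by
  by_cases h0 : m = 0
  · simp [h0]
  have hmt : m ≠ ∞ := ne_top_of_le_ne_top ENNReal.one_ne_top hm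
  have hpos : 0 < m.toReal := ENNReal.toReal_pos h0 hmt
  rw [negLog, if_neg h0, ENNReal.lt_div_iff_mul_lt (by simp [hn.ne']) (by simp)] at h
  have h1 : (s : ℝ≥0∞) * n = ENNReal.ofReal (s * n) := by
    rw [ENNReal.ofReal_mul s.coe_nonneg]
    simp
  rw [h1, ENNReal.ofReal_lt_ofReal_iff_of_nonneg (by positivity)] at h
  rw [← ENNReal.ofReal_toReal hmt]
  refine ENNReal.ofReal_le_ofReal ?_
  rw [← Real.log_le_iff_le_exp hpos]
  linarith

lemma le_negLog_div {m : ℝ≥0∞} {C t : ℝ} (hC : 0 < C) {r : ℝ≥0} {n : ℕ} (hn : 0 < n)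
    (h : m ≤ ENNReal.ofReal (C * Real.exp (-t * n))) (hr : r * n ≤ t * n - Real.log C) :
    (r : ℝ≥0∞) ≤ negLog m / n := by
  rw [ENNReal.le_div_iff_mul_le (by simp [hn.ne']) (by simp)]
  by_cases h0 : m = 0
  · simp [negLog, h0]
  have hmt : m ≠ ∞ := ne_top_of_le_ne_top ENNReal.ofReal_ne_top h
  have hpos : 0 < m.toReal := ENNReal.toReal_pos h0 hmt
  have h1 : (r : ℝ≥0∞) * n = ENNReal.ofReal (r * n) := by
    rw [ENNReal.ofReal_mul r.coe_nonneg]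
    simp
  rw [negLog, if_neg h0, h1]
  refine ENNReal.ofReal_le_ofReal ?_
  have h2 : m.toReal ≤ C * Real.exp (-t * n) := ENNReal.toReal_le_of_le_ofReal (by positivity) h
  have h3 := Real.log_le_log hpos h2
  rw [Real.log_mul hC.ne' (Real.exp_ne_zero _), Real.log_exp] at h3
  linarith

/-- The inequality `h̲_μ(T) ≤ h^B_top(T,K)`: if `h̲_μ(T) > s`, then for some `ε` and `N` the set of
points all of whose Bowen balls of radius `ε` and length `n ≥ N` have mass at most `exp (-s n)` is
not null, and its outer measure bounds from below the cost of every cover of `K`. -/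
theorem lowerEntropy_le_bowenEntropy [MeasurableSpace X] [BorelSpace X]
    {K : Set X} (hK : IsClosed K) (μ : Measure X) [IsProbabilityMeasure μ] (hμK : μ K = 1) :
    lowerEntropy T μ ≤ bowenEntropy T K := by
  refine ENNReal.le_of_forall_nnreal_lt fun r hr => ?_
  obtain ⟨s, hrs, hs⟩ := ENNReal.lt_iff_exists_nnreal_btwn.1 hr
  let A : ℕ → ℕ → Set X := fun k N =>
    {x | ∀ n ≥ N, μ (bowenBall T x n (1 / (k + 1))) ≤ ENNReal.ofReal (Real.exp (-s * n))}
  have hA : ∃ k N, μ (A k N) ≠ 0 := by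
    by_contra! h
    refine absurd hs (not_lt.2 ?_)
    have hnull : μ (⋃ k, ⋃ N, A k N) = 0 :=
      measure_iUnion_null fun k => measure_iUnion_null fun N => h k N
    have hae : ∀ᵐ x ∂μ, lowerLocalEntropy T μ x ≤ s := by
      refine measure_mono_null (fun x hx => ?_) hnull
      have hx' : (s : ℝ≥0∞) < lowerLocalEntropy T μ x := not_le.1 hx
      obtain ⟨ε, hx'⟩ := lt_iSup_iff.1 hx'
      obtain ⟨hε, hx'⟩ := lt_iSup_iff.1 hx'
      obtain ⟨k, hk⟩ := exists_nat_one_div_lt hε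
      obtain ⟨N, hN⟩ := eventually_atTop.1 (eventually_lt_of_lt_liminf hx')
      refine mem_iUnion.2 ⟨k, mem_iUnion.2 ⟨N + 1, fun n hn => ?_⟩⟩
      refine (measure_mono fun y hy j hj => (hy j hj).trans hk).trans
        (le_exp_of_lt_negLog_div prob_le_one (by omega) (hN n (by omega)))
    calc lowerEntropy T μ ≤ ∫⁻ _, (s : ℝ≥0∞) ∂μ := lintegral_mono_ae hae
      _ = s := by simp
  obtain ⟨k, N, hkN⟩ := hA
  set ε : ℝ := 1 / (k + 1) with hε
  have hεpos : 0 < ε := by positivity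
  have hMle : μ (A k N ∩ K) ≤ Mpre T s N (ε / 2) K := by
    refine le_iInf fun I => le_iInf fun x => le_iInf fun n => le_iInf fun hn =>
      le_iInf fun hc => ?_
    have hsub : A k N ∩ K ⊆ ⋃ i : I, A k N ∩ bowenBall T (x i) (n i) (ε / 2) := by
      rintro z ⟨hz, hzK⟩
      obtain ⟨i, hi, hzi⟩ := mem_iUnion₂.1 (hc hzK)
      exact mem_iUnion.2 ⟨⟨i, hi⟩, hz, hzi⟩
    refine (measure_mono hsub).trans ((measure_iUnion_le _).trans (ENNReal.tsum_le_tsum fun i => ?_))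
    rcases (A k N ∩ bowenBall T (x i) (n i) (ε / 2)).eq_empty_or_nonempty with h | ⟨y, hyA, hy⟩
    · simp [h]
    · refine (measure_mono fun z hz => ?_).trans (hyA (n i) (hn i i.2))
      have := mem_bowenBall_two_mul hy hz.2
      rwa [mul_div_cancel₀ _ two_ne_zero] at this
  have hM : Mpre T s N (ε / 2) K ≠ 0 := by
    intro h0
    rw [h0, nonpos_iff_eq_zero,
      measure_inter_conull ((prob_compl_eq_zero_iff hK.measurableSet).2 hμK)] at hMle
    exact hkN hMle
  have := ofReal_le_bowenEntropy (half_pos hεpos) hM (s' := r)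
    (by exact_mod_cast hrs)
  simpa using this

/-- The inequality `h^B_top(T,K) ≤ sup h̲_μ(T)`: a Frostman measure for the Bowen balls. -/
theorem exists_le_lowerEntropy [CompactSpace X] [MeasurableSpace X] [BorelSpace X]
    (hT : Continuous T) {K : Set X} (hne : K.Nonempty) (hK : IsClosed K) {r : ℝ≥0}
    (hr : (r : ℝ≥0∞) < bowenEntropy T K) :
    ∃ μ : Measure X, IsProbabilityMeasure μ ∧ μ K = 1 ∧ (r : ℝ≥0∞) ≤ lowerEntropy T μ := by
  classical
  obtain ⟨s, hr⟩ := lt_iSup_iff.1 hr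
  obtain ⟨hs, hr⟩ := lt_iSup_iff.1 hr
  have hrs : (r : ℝ) < s := by
    rw [← ENNReal.ofReal_coe_nnreal] at hr
    exact (ENNReal.ofReal_lt_ofReal_iff_of_nonneg r.coe_nonneg).1 hr
  have hMtop : 0 < Mtop T s K := by simp [hs]
  obtain ⟨ε', hMtop⟩ := lt_iSup_iff.1 hMtop
  obtain ⟨hε', hMtop⟩ := lt_iSup_iff.1 hMtop
  obtain ⟨N₀, hN₀⟩ := lt_iSup_iff.1 hMtop
  -- `s = t + δ` and `t = r + δ`: one `δ` is lost to the weighted covers, the other to the constant.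
  obtain ⟨δ, hδdef⟩ : ∃ δ, δ = (s - r) / 2 := ⟨_, rfl⟩
  obtain ⟨t, htdef⟩ : ∃ t, t = r + δ := ⟨_, rfl⟩
  obtain ⟨ε, hεdef⟩ : ∃ ε, ε = ε' / 2 := ⟨_, rfl⟩
  have hδ : 0 < δ := by linarith
  have hε : 0 < ε := by linarith
  have hst : s = t + δ := by linarith
  have hεε' : ε' = 2 * ε := by linarith
  have hsum : Summable fun n : ℕ => Real.exp (-δ * n) := by
    have h := Real.summable_exp_nat_mul_iff.2 (neg_lt_zero.2 hδ)
    simpa only [mul_comm] using h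
  obtain ⟨S, hS⟩ := summable_iff_vanishing_norm.1 hsum 1 one_pos
  obtain ⟨N, hNdef⟩ : ∃ N, N = max N₀ (S.sup id + 1) := ⟨_, rfl⟩
  have hN : ∀ G : Finset ℕ, (∀ n ∈ G, N ≤ n) → ∑ n ∈ G, Real.exp (-δ * n) < 1 := by
    intro G hG
    refine (le_abs_self _).trans_lt (hS G ?_)
    rw [Finset.disjoint_left]
    intro n hn hnS
    have h1 : n ≤ S.sup id := Finset.le_sup (f := id) hnS
    have h2 := hG n hn
    omega
  have hM : 0 < Mpre T (t + δ) N (2 * ε) K := by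
    rw [← hst, ← hεε']
    exact hN₀.trans_le (Mpre_mono_N s (by omega) ε' K)
  -- The truncation at `1` spares a proof that `Mpre` is finite.
  obtain ⟨κ, hκdef⟩ : ∃ κ, κ = (min (Mpre T (t + δ) N (2 * ε) K) 1).toReal := ⟨_, rfl⟩
  have hκ : 0 < κ := by
    rw [hκdef]
    exact ENNReal.toReal_pos (lt_min hM one_pos).ne'
      (ne_top_of_le_ne_top ENNReal.one_ne_top (min_le_right _ _))
  have hcost : ∀ p : {p : X × ℕ // N ≤ p.2}, 0 ≤ Real.exp (-t * p.1.2) := fun p =>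
    Real.exp_nonneg _
  obtain ⟨μ, hμ, hμK, hμB⟩ := exists_measure_of_weights
    (fun p : {p : X × ℕ // N ≤ p.2} => bowenBall T p.1.1 p.1.2 ε)
    (fun p => isOpen_bowenBall hT _ _ _) (fun p => κ⁻¹ * Real.exp (-t * p.1.2))
    (fun p => mul_nonneg (inv_nonneg.2 hκ.le) (hcost p)) K hK (by
      obtain ⟨F, hF⟩ := CompactSpace.elim_nhds_subcover (fun x => bowenBall T x N ε) (fun x =>
        (isOpen_bowenBall hT x N ε).mem_nhds (mem_bowenBall_self x N hε))
      refine ⟨F.image fun x => ⟨(x, N), le_rfl⟩, fun z => ?_⟩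
      have hz : z ∈ ⋃ x ∈ F, bowenBall T x N ε := hF ▸ mem_univ z
      obtain ⟨x, hx, hzx⟩ := mem_iUnion₂.1 hz
      exact ⟨_, Finset.mem_image_of_mem _ hx, hzx⟩) (by
      intro c hc
      have h1 := Mpre_le_wsum hne t δ ε N hN c hc
      have h2 : κ ≤ wsum (fun p => Real.exp (-t * p.1.2)) c := by
        rw [hκdef]
        exact ENNReal.toReal_le_of_le_ofReal (wsum_nonneg _ hcost c) ((min_le_left _ _).trans h1)
      have h3 : wsum (fun p : {p : X × ℕ // N ≤ p.2} => κ⁻¹ * Real.exp (-t * p.1.2)) c =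
          κ⁻¹ * wsum (fun p => Real.exp (-t * p.1.2)) c := by
        simp only [wsum, Finsupp.sum, Finset.mul_sum]
        exact Finset.sum_congr rfl fun p _ => by ring
      rw [h3, ← div_eq_inv_mul, one_le_div hκ]
      exact h2)
  refine ⟨μ, hμ, hμK, ?_⟩
  have hloc : ∀ x, (r : ℝ≥0∞) ≤ lowerLocalEntropy T μ x := by
    intro x
    refine le_trans ?_ (le_iSup₂ (f := fun (ε : ℝ) (_ : 0 < ε) =>
      liminf (fun n : ℕ => negLog (μ (bowenBall T x n ε)) / n) atTop) ε hε)
    refine le_liminf_of_le (by isBoundedDefault) ?_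
    have hlarge : ∀ᶠ n : ℕ in atTop, Real.log κ⁻¹ ≤ δ * n :=
      (tendsto_natCast_atTop_atTop.const_mul_atTop hδ).eventually_ge_atTop _
    filter_upwards [hlarge, eventually_ge_atTop (N + 1)] with n h1 h2
    refine le_negLog_div (inv_pos.2 hκ) (by omega) (hμB ⟨(x, n), by simp; omega⟩) ?_
    rw [htdef]
    linarith
  calc (r : ℝ≥0∞) = ∫⁻ _, (r : ℝ≥0∞) ∂μ := by simp
    _ ≤ lowerEntropy T μ := lintegral_mono hloc

end Bowen

/-- **Variational principle for Bowen topological entropy of compact sets**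
(Feng–Huang, Theorem 1.1(i)): for a topological dynamical system `(X,T)` and a non-empty
compact set `K ⊆ X`,
`h^B_top(T,K) = sup { h̲_μ(T) : μ a Borel probability measure on X with μ(K) = 1 }`. -/
theorem bowenEntropy_eq_iSup_lowerEntropy
    {X : Type*} [MetricSpace X] [CompactSpace X] [MeasurableSpace X] [BorelSpace X]
    (T : X → X) (hT : Continuous T) (K : Set X) (hne : K.Nonempty) (hK : IsCompact K) :
    bowenEntropy T K =
      ⨆ (μ : Measure X) (_ : IsProbabilityMeasure μ) (_ : μ K = 1), lowerEntropy T μ := by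
  apply le_antisymm
  · refine ENNReal.le_of_forall_nnreal_lt fun r hr => ?_
    obtain ⟨μ, hμ, hμK, hle⟩ := exists_le_lowerEntropy hT hne hK.isClosed hr
    exact le_iSup_of_le μ <| le_iSup_of_le hμ <| le_iSup_of_le hμK hle
  · exact iSup_le fun μ => iSup_le fun hμ => iSup_le fun hμK =>
      lowerEntropy_le_bowenEntropy hK.isClosed μ hμK
end

section
/- Let (X,T) be a topological dynamical system with finite topological entropy h_top(T) < ∞. Then for every analytic subset Z ⊆ X, the Bowen topological entropy of Z equals the supremum of the Bowen topological entropies of its compact subsets: h^B_top(T,Z) = sup { h^B_top(T,K) : K ⊆ Z, K compact }. -/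
/-!
Let `s < h(Z)`, so that `M^{s'}_{N,ε}(Z) > 0` for some `s' > s`, `N` and `ε > 0`; a compact `K ⊆ Z`
with `M^{s''}_{N,ε/2}(K) > 0` for some `s < s'' < s'` is needed.

By compactness of `X`, for each level `n` finitely many Bowen balls `B_n(x, ε/2)` cover `X`. Keeping
only the balls `B_n(x, ε)` with these centres and `n ≥ N` gives a family with finitely many members
at each level, and the covering functional `coverCost` of this family lies between `M_{N,ε}` and
`M_{N,ε/2}` (`Mpre_le_coverCost`, `coverCost_le_Mpre`).

The key point (`exists_lt_coverCost`) is an increasing sets lemma with an arbitrarily small loss in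
the exponent: if `c < C_{s'}(⋃ A k)` with `A` increasing, and `s < s'`, then `c < C_s(A k)` for
some `k`. Indeed, let `J k` be covers of `A k` of `s`-cost at most `L`, and let `I` be their limit
along an ultrafilter. As there are finitely many balls below any level, `I` agrees with some
`J k` below any prescribed level, and `I` together with the high-level tails of such `J k` covers
`⋃ A k`. The `s`-cost of `I` is at most `L`, while the `s'`-cost of a tail of `J k` above level `m`
is at most `exp (-(s' - s) m) L`, so the tails contribute as little as desired.

Writing `Z = f(ℕ^ℕ)` and applying this lemma successively, with exponents decreasing to `s''`,
bounds the coordinates one at a time and yields `b` with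
`c < C(f {x | x i ≤ b i for i < k})` for all `k`. Then `K = f {x | x i ≤ b i for all i}` is
compact, and any open cover of `K` already covers one of these sets.
-/

open Filter Set MeasureTheory Topology
open scoped ENNReal NNReal

section Abstract

/-! ### Covering functionals of families with finitely many members at each level -/

/-- The weight `exp (-s n)` of a set of level `n`. -/
noncomputable def levelWeight (s : ℝ) (n : ℕ) : ℝ≥0∞ := ENNReal.ofReal (Real.exp (-s * n))

/-- The infimum of `Σ_{i ∈ J} exp (-s (lev i))` over the subfamilies `J` of `(U i)` covering `A`. -/
noncomputable def coverCost {X ι : Type*} (lev : ι → ℕ) (U : ι → Set X) (s : ℝ) (A : Set X) :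
    ℝ≥0∞ :=
  ⨅ (J : Set ι) (_ : A ⊆ ⋃ i ∈ J, U i), ∑' i : J, levelWeight s (lev i)

lemma levelWeight_anti {s s' : ℝ} (h : s ≤ s') (n : ℕ) : levelWeight s' n ≤ levelWeight s n := by
  unfold levelWeight
  gcongr

/-- Above level `m`, raising the exponent from `s` to `s'` gains a factor `exp (-(s' - s) m)`. -/
lemma levelWeight_le_mul {s s' : ℝ} (h : s ≤ s') {m n : ℕ} (hmn : m ≤ n) :
    levelWeight s' n ≤ levelWeight (s' - s) m * levelWeight s n := by
  unfold levelWeight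
  rw [← ENNReal.ofReal_mul (Real.exp_pos _).le, ← Real.exp_add]
  gcongr
  have : (m : ℝ) ≤ n := by exact_mod_cast hmn
  nlinarith [mul_le_mul_of_nonneg_left this (sub_nonneg.2 h)]

lemma tendsto_levelWeight {s : ℝ} (h : 0 < s) : Tendsto (levelWeight s) atTop (𝓝 0) := by
  unfold levelWeight
  rw [← ENNReal.ofReal_zero]
  refine ENNReal.tendsto_ofReal (Real.tendsto_exp_atBot.comp ?_)
  exact tendsto_natCast_atTop_atTop.const_mul_atTop_of_neg (by linarith)

variable {X ι : Type*} {lev : ι → ℕ} {U : ι → Set X}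

lemma coverCost_le {s : ℝ} {A : Set X} (J : Set ι) (h : A ⊆ ⋃ i ∈ J, U i) :
    coverCost lev U s A ≤ ∑' i : J, levelWeight s (lev i) :=
  iInf₂_le J h

lemma coverCost_anti {s s' : ℝ} (h : s ≤ s') (A : Set X) :
    coverCost lev U s' A ≤ coverCost lev U s A := by
  refine iInf₂_mono fun J _ => ?_
  exact ENNReal.tsum_le_tsum fun i => levelWeight_anti h _

lemma exists_cover_of_coverCost_lt {s : ℝ} {A : Set X} {c : ℝ≥0∞} (h : coverCost lev U s A < c) :
    ∃ J : Set ι, A ⊆ (⋃ i ∈ J, U i) ∧ ∑' i : J, levelWeight s (lev i) < c := by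
  unfold coverCost at h
  simp only [iInf_lt_iff] at h
  obtain ⟨J, hJ, h⟩ := h
  exact ⟨J, hJ, h⟩

/-- Increasing sets lemma: passing from `⋃ k, A k` to some `A k` costs only an arbitrarily small
decrease of the exponent. -/
lemma exists_lt_coverCost (hlev : ∀ m, {i | lev i < m}.Finite) {s s' : ℝ} (hs : s < s')
    {A : ℕ → Set X} (hA : Monotone A) {c : ℝ≥0∞} (hc : c < coverCost lev U s' (⋃ k, A k)) :
    ∃ k, c < coverCost lev U s (A k) := by
  by_contra! hcon
  obtain ⟨L, hcL, hL⟩ := exists_between hc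
  have hLtop : L ≠ ∞ := hL.ne_top
  choose J hJcov hJ using fun k => exists_cover_of_coverCost_lt ((hcon k).trans_lt hcL)
  -- The limit of the covers `J k` along a free ultrafilter.
  set I : Set ι := {i | ∀ᶠ k in hyperfilter ℕ, i ∈ J k} with hI
  have hev : ∀ i, ∀ᶠ k in hyperfilter ℕ, (i ∈ J k ↔ i ∈ I) := by
    intro i
    by_cases hi : i ∈ I
    · filter_upwards [show ∀ᶠ k in hyperfilter ℕ, i ∈ J k from hi] with k hk
      simp [hk, hi]
    · have : ∀ᶠ k in hyperfilter ℕ, ¬ i ∈ J k := Ultrafilter.eventually_not.2 hi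
      filter_upwards [this] with k hk
      simp [hk, hi]
  have hagree : ∀ S : Set ι, S.Finite → ∀ᶠ k in hyperfilter ℕ, ∀ i ∈ S, (i ∈ J k ↔ i ∈ I) :=
    fun S hS => (eventually_all_finite hS).2 fun i _ => hev i
  have hIcost : ∑' i : I, levelWeight s' (lev i) ≤ L := by
    rw [ENNReal.tsum_eq_iSup_sum]
    refine iSup_le fun S => ?_
    have hfin : (((↑) : I → ι) '' (S : Set I)).Finite := S.finite_toSet.image _
    obtain ⟨k, hk⟩ := (hagree _ hfin).exists
    have hmem : ∀ i ∈ S, (i : ι) ∈ J k := fun i hi =>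
      (hk i ⟨i, hi, rfl⟩).2 i.2
    calc ∑ i ∈ S, levelWeight s' (lev i) ≤ ∑ i ∈ S, levelWeight s (lev i) :=
          Finset.sum_le_sum fun i _ => levelWeight_anti hs.le _
      _ = ∑' i : (S : Set I), levelWeight s (lev i) :=
          (Finset.tsum_subtype' S (fun i : I => levelWeight s (lev i))).symm
      _ ≤ ∑' i : J k, levelWeight s (lev i) :=
          ENNReal.tsum_comp_le_tsum_of_injective
            (f := fun i : (S : Set I) => (⟨i.1.1, hmem i.1 i.2⟩ : J k))
            (fun a b hab => Subtype.ext (Subtype.ext (congrArg (fun z : J k => (z : ι)) hab)))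
            (fun i : J k => levelWeight s (lev i))
      _ ≤ L := (hJ k).le
  have hle : coverCost lev U s' (⋃ k, A k) ≤ L := by
    refine ENNReal.le_of_forall_pos_le_add fun η hη _ => ?_
    obtain ⟨e, he0, hesum⟩ :=
      ENNReal.exists_pos_sum_of_countable' (ENNReal.coe_pos.2 hη).ne' ℕ
    -- `m j` is the level from which the tail costs less than `e j`.
    have hm : ∀ j, ∃ m : ℕ, levelWeight (s' - s) m * L < e j := by
      intro j
      have ht : Tendsto (fun m => levelWeight (s' - s) m * L) atTop (𝓝 (0 * L)) :=
        ENNReal.Tendsto.mul_const (tendsto_levelWeight (sub_pos.2 hs)) (Or.inr hLtop)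
      rw [zero_mul] at ht
      exact (ht.eventually_lt_const (he0 j)).exists
    choose m hm using hm
    have hk : ∀ j, ∃ k, j ≤ k ∧ ∀ i, lev i < m j → (i ∈ J k ↔ i ∈ I) := by
      intro j
      have h1 : ∀ᶠ k in hyperfilter ℕ, j ≤ k := by
        apply hyperfilter_le_cofinite
        rw [Nat.cofinite_eq_atTop]
        exact eventually_ge_atTop j
      exact (h1.and (hagree _ (hlev (m j)))).exists
    choose k hjk hk using hk
    let tail : ℕ → Set ι := fun j => {i | i ∈ J (k j) ∧ m j ≤ lev i}
    have htail : ∀ j, ∑' i : tail j, levelWeight s' (lev i) ≤ e j := by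
      intro j
      calc ∑' i : tail j, levelWeight s' (lev i)
          ≤ ∑' i : tail j, levelWeight (s' - s) (m j) * levelWeight s (lev i) :=
            ENNReal.tsum_le_tsum fun i => levelWeight_le_mul hs.le i.2.2
        _ = levelWeight (s' - s) (m j) * ∑' i : tail j, levelWeight s (lev i) :=
            ENNReal.tsum_mul_left
        _ ≤ levelWeight (s' - s) (m j) * ∑' i : J (k j), levelWeight s (lev i) := by
            gcongr
            exact ENNReal.tsum_mono_subtype (fun i => levelWeight s (lev i)) (fun i hi => hi.1)
        _ ≤ levelWeight (s' - s) (m j) * L := by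
            gcongr
            exact (hJ _).le
        _ ≤ e j := (hm j).le
    have hcov : (⋃ k, A k) ⊆ ⋃ i ∈ I ∪ ⋃ j, tail j, U i := by
      intro x hx
      obtain ⟨j, hj⟩ := mem_iUnion.1 hx
      obtain ⟨i, hi, hxi⟩ := mem_iUnion₂.1 (hJcov (k j) (hA (hjk j) hj))
      refine mem_iUnion₂.2 ⟨i, ?_, hxi⟩
      rcases lt_or_ge (lev i) (m j) with h | h
      · exact Or.inl ((hk j i h).1 hi)
      · exact Or.inr (mem_iUnion.2 ⟨j, hi, h⟩)
    calc coverCost lev U s' (⋃ k, A k)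
        ≤ ∑' i : (I ∪ ⋃ j, tail j : Set ι), levelWeight s' (lev i) := coverCost_le _ hcov
      _ ≤ ∑' i : I, levelWeight s' (lev i) + ∑' i : (⋃ j, tail j : Set ι), levelWeight s' (lev i) :=
          ENNReal.tsum_union_le (fun i => levelWeight s' (lev i)) _ _
      _ ≤ L + ∑' j, ∑' i : tail j, levelWeight s' (lev i) :=
          add_le_add hIcost (ENNReal.tsum_iUnion_le_tsum (fun i => levelWeight s' (lev i)) _)
      _ ≤ L + ∑' j, e j := by
          gcongr with j
          exact htail j
      _ ≤ L + η := by gcongr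
  exact absurd hL hle.not_gt

/-! ### Compact subsets of analytic sets -/

/-- An open set containing the image of the box `{x | ∀ i, x i ≤ b i}` contains the image of the
set where only finitely many of the constraints are imposed. -/
lemma exists_image_box_subset [TopologicalSpace X] {f : (ℕ → ℕ) → X} (hf : Continuous f)
    (b : ℕ → ℕ) {V : Set X} (hV : IsOpen V) (hKV : f '' {x | ∀ i, x i ≤ b i} ⊆ V) :
    ∃ k, f '' {x | ∀ i < k, x i ≤ b i} ⊆ V := by
  by_contra! hcon
  have hx : ∀ k, ∃ x : ℕ → ℕ, (∀ i < k, x i ≤ b i) ∧ f x ∉ V := by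
    intro k
    obtain ⟨_, ⟨x, hx, rfl⟩, hxV⟩ := not_subset.1 (hcon k)
    exact ⟨x, hx, hxV⟩
  choose x hxb hxV using hx
  have hQ : IsCompact (Set.univ.pi fun i => Iic (b i)) :=
    isCompact_univ_pi fun i => (finite_Iic (b i)).isCompact
  obtain ⟨y, hy, φ, hφ, hlim⟩ := hQ.tendsto_subseq (x := fun k i => min (x k i) (b i))
    (fun k i _ => mem_Iic.2 (min_le_right _ _))
  -- The truncated points agree with the original ones in each coordinate from some point on.
  have hlim' : Tendsto (fun k => x (φ k)) atTop (𝓝 y) := by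
    rw [tendsto_pi_nhds] at hlim ⊢
    intro i
    refine (hlim i).congr' ?_
    filter_upwards [eventually_gt_atTop i] with k hk
    exact min_eq_left (hxb _ i (hk.trans_le (hφ.id_le k)))
  have hyV : f y ∈ V := hKV ⟨y, fun i => hy i (mem_univ i), rfl⟩
  obtain ⟨k, hk⟩ := ((hf.tendsto y).comp hlim' |>.eventually (hV.mem_nhds hyV)).exists
  exact hxV _ hk

/-- Bounding the coordinates one at a time by `exists_lt_coverCost`. -/
lemma exists_box (hlev : ∀ m, {i | lev i < m}.Finite) (f : (ℕ → ℕ) → X)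
    {σ : ℕ → ℝ} (hσ : StrictAnti σ) {c : ℝ≥0∞} (hc : c < coverCost lev U (σ 0) (range f)) :
    ∃ b : ℕ → ℕ, ∀ k, c < coverCost lev U (σ k) (f '' {x | ∀ i < k, x i ≤ b i}) := by
  have step : ∀ (k : ℕ) (b : ℕ → ℕ), ∃ v : ℕ,
      c < coverCost lev U (σ k) (f '' {x | ∀ i < k, x i ≤ b i}) →
      c < coverCost lev U (σ (k + 1))
        (f '' {x | ∀ i < k + 1, x i ≤ Function.update b k v i}) := by
    intro k b
    by_cases h : c < coverCost lev U (σ k) (f '' {x | ∀ i < k, x i ≤ b i})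
    swap
    · exact ⟨0, fun h' => absurd h' h⟩
    let A : ℕ → Set X := fun v => f '' {x | (∀ i < k, x i ≤ b i) ∧ x k ≤ v}
    have hA : Monotone A := fun v w hvw =>
      image_mono fun x hx => ⟨hx.1, hx.2.trans hvw⟩
    have hU : (f '' {x | ∀ i < k, x i ≤ b i}) = ⋃ v, A v := by
      ext z
      simp only [A, mem_iUnion, mem_image, mem_ofPred_eq]
      exact ⟨fun ⟨x, hx, hz⟩ => ⟨x k, x, ⟨hx, le_rfl⟩, hz⟩,
        fun ⟨v, x, hx, hz⟩ => ⟨x, hx.1, hz⟩⟩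
    rw [hU] at h
    obtain ⟨v, hv⟩ := exists_lt_coverCost hlev (hσ (Nat.lt_succ_self k)) hA h
    refine ⟨v, fun _ => ?_⟩
    convert hv using 3
    ext x
    simp only [mem_ofPred_eq, Nat.lt_succ_iff_lt_or_eq, or_imp, forall_and, forall_eq,
      Function.update_self]
    refine and_congr_left fun _ => forall₂_congr fun i hi => ?_
    rw [Function.update_of_ne hi.ne]
  choose v hv using step
  let B : ℕ → ℕ → ℕ := fun k => Nat.rec (fun _ => 0) (fun k b => Function.update b k (v k b)) k
  have hBs : ∀ k, B (k + 1) = Function.update (B k) k (v k (B k)) := fun k => rfl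
  have hB : ∀ k, c < coverCost lev U (σ k) (f '' {x | ∀ i < k, x i ≤ B k i}) := by
    intro k
    induction k with
    | zero => simpa using hc
    | succ k ih =>
      rw [hBs]
      exact hv k (B k) ih
  -- Coordinate `i` is fixed at stage `i + 1`.
  have hstab : ∀ k i, i < k → B k i = B (i + 1) i := by
    intro k i hik
    induction k, hik using Nat.le_induction with
    | base => rfl
    | succ k hk ih => rw [hBs, Function.update_of_ne (by omega), ih]
  refine ⟨fun i => B (i + 1) i, fun k => ?_⟩
  convert hB k using 3
  ext x
  exact forall₂_congr fun i hi => by rw [hstab k i hi]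

/-- Inner regularity of covering functionals by open sets on the image of `ℕ^ℕ`, with an
arbitrarily small loss in the exponent. -/
lemma exists_compact_coverCost [TopologicalSpace X] (hlev : ∀ m, {i | lev i < m}.Finite)
    (hU : ∀ i, IsOpen (U i)) {f : (ℕ → ℕ) → X} (hf : Continuous f) {s s' : ℝ} (hs : s < s')
    {c : ℝ≥0∞} (hc : c < coverCost lev U s' (range f)) :
    ∃ K ⊆ range f, IsCompact K ∧ c ≤ coverCost lev U s K := by
  obtain ⟨σ, hσ, hσmem, -⟩ := exists_seq_strictAnti_tendsto' hs
  have hσs : ∀ k, s ≤ σ k := fun k => (hσmem k).1.le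
  have hc0 : c < coverCost lev U (σ 0) (range f) :=
    hc.trans_le (coverCost_anti (hσmem 0).2.le _)
  obtain ⟨b, hb⟩ := exists_box hlev f hσ hc0
  refine ⟨f '' {x | ∀ i, x i ≤ b i}, image_subset_range _ _, ?_, ?_⟩
  · have hQ : IsCompact (Set.univ.pi fun i => Iic (b i)) :=
      isCompact_univ_pi fun i => (finite_Iic (b i)).isCompact
    have : {x : ℕ → ℕ | ∀ i, x i ≤ b i} = Set.univ.pi fun i => Iic (b i) := by
      ext x; simp [Pi.le_def]
    rw [this]
    exact hQ.image hf
  · refine le_iInf₂ fun J hJ => ?_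
    obtain ⟨k, hk⟩ :=
      exists_image_box_subset hf b (isOpen_biUnion fun i _ => hU i) hJ
    calc c ≤ coverCost lev U (σ k) (f '' {x | ∀ i < k, x i ≤ b i}) := (hb k).le
      _ ≤ coverCost lev U s (f '' {x | ∀ i < k, x i ≤ b i}) := coverCost_anti (hσs k) _
      _ ≤ _ := coverCost_le J hk

end Abstract

section Bowen

/-! ### Bowen balls and the functionals `M` -/

variable {X : Type*} [MetricSpace X] {T : X → X}

lemma bowenBall_half_subset {x y : X} {n : ℕ} {ε : ℝ} (h : y ∈ bowenBall T x n (ε / 2)) :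
    bowenBall T y n (ε / 2) ⊆ bowenBall T x n ε := by
  intro z hz k hk
  have h1 := h k hk
  have h2 := hz k hk
  linarith [dist_triangle (T^[k] x) (T^[k] y) (T^[k] z)]

lemma Mpre_mono_set {s : ℝ} {N : ℕ} {ε : ℝ} {A B : Set X} (h : A ⊆ B) :
    Mpre T s N ε A ≤ Mpre T s N ε B := by
  unfold Mpre
  gcongr with I x n hn
  exact iInf_mono' fun hB => ⟨h.trans hB, le_rfl⟩

lemma bowenEntropy_mono {A B : Set X} (h : A ⊆ B) : bowenEntropy T A ≤ bowenEntropy T B := by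
  have hM : ∀ s, Mtop T s A ≤ Mtop T s B := fun s =>
    iSup₂_mono fun ε _ => iSup_mono fun N => Mpre_mono_set h
  refine iSup₂_le fun s hs => ?_
  exact le_iSup₂_of_le s (top_le_iff.1 (hs ▸ hM s)) le_rfl

lemma Mpre_mono_nat {s : ℝ} {N N' : ℕ} (hN : N ≤ N') {ε : ℝ} {A : Set X} :
    Mpre T s N ε A ≤ Mpre T s N' ε A := by
  unfold Mpre
  gcongr with I x n
  exact iInf_mono' fun hB => ⟨fun i hi => hN.trans (hB i hi), le_rfl⟩

/-- Covers indexed by an arbitrary countable type may be used to bound `M^s_{N,ε}`. -/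
lemma Mpre_le_tsum [Nonempty X] {κ : Type*} [Countable κ] {s : ℝ} {N : ℕ} {ε : ℝ} {A : Set X}
    (x : κ → X) (n : κ → ℕ) (hn : ∀ i, N ≤ n i) (hA : A ⊆ ⋃ i, bowenBall T (x i) (n i) ε) :
    Mpre T s N ε A ≤ ∑' i, levelWeight s (n i) := by
  obtain ⟨e, he⟩ := exists_injective_nat κ
  have hx : ∀ i, Function.extend e x (fun _ => Classical.arbitrary X) (e i) = x i :=
    fun i => he.extend_apply _ _ _
  have hn' : ∀ i, Function.extend e n (fun _ => 0) (e i) = n i := fun i => he.extend_apply _ _ _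
  unfold Mpre
  refine iInf_le_of_le (range e) <| iInf_le_of_le (Function.extend e x fun _ => Classical.arbitrary X)
    <| iInf_le_of_le (Function.extend e n fun _ => 0) <| iInf_le_of_le ?_ <| iInf_le_of_le ?_ ?_
  · rintro _ ⟨i, rfl⟩
    rw [hn']
    exact hn i
  · rw [biUnion_range]
    simpa only [hx, hn'] using hA
  · rw [← (Equiv.ofInjective e he).tsum_eq]
    refine ENNReal.tsum_le_tsum fun i => ?_
    simp only [Equiv.ofInjective_apply, hn']
    exact le_rfl

/-- The functional `M^s_{N,ε}` grows at least by the factor `exp ((s' - s) N)` when the exponent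
drops from `s'` to `s`. -/
lemma Mpre_le_mul {s s' : ℝ} (hs : s ≤ s') (N : ℕ) (ε : ℝ) (A : Set X) :
    Mpre T s' N ε A ≤ levelWeight (s' - s) N * Mpre T s N ε A := by
  have hne : levelWeight (s' - s) N ≠ 0 := by
    simp [levelWeight, Real.exp_pos]
  have hnt : levelWeight (s' - s) N ≠ ∞ := ENNReal.ofReal_ne_top
  rw [mul_comm, ← ENNReal.div_le_iff hne hnt]
  conv_rhs => unfold Mpre
  refine le_iInf fun I => le_iInf fun x => le_iInf fun n => le_iInf fun hn => le_iInf fun hA => ?_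
  rw [ENNReal.div_le_iff hne hnt, mul_comm, ← ENNReal.tsum_mul_left]
  calc Mpre T s' N ε A ≤ ∑' i : I, levelWeight s' (n i) :=
        iInf_le_of_le I <| iInf_le_of_le x <| iInf_le_of_le n <| iInf_le_of_le hn <|
          iInf_le_of_le hA le_rfl
    _ ≤ _ := ENNReal.tsum_le_tsum fun i => levelWeight_le_mul hs (hn i i.2)

lemma Mtop_eq_top_of_Mpre_pos {s s' : ℝ} (hs : s < s') {N : ℕ} {ε : ℝ} (hε : 0 < ε) {A : Set X}
    (h : 0 < Mpre T s' N ε A) : Mtop T s A = ∞ := by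
  by_contra hM
  have hle : ∀ n, Mpre T s n ε A ≤ Mtop T s A := fun n =>
    (le_iSup (fun n => Mpre T s n ε A) n).trans
      (le_iSup₂ (f := fun (ε : ℝ) (_ : 0 < ε) => MpreEps T s ε A) ε hε)
  have ht : Tendsto (fun n => levelWeight (s' - s) n * Mtop T s A) atTop (𝓝 (0 * Mtop T s A)) :=
    ENNReal.Tendsto.mul_const (tendsto_levelWeight (sub_pos.2 hs)) (Or.inr hM)
  rw [zero_mul] at ht
  obtain ⟨n, hn, hnN⟩ := ((ht.eventually_lt_const h).and (eventually_ge_atTop N)).exists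
  refine absurd hn (not_lt.2 ?_)
  calc Mpre T s' N ε A ≤ Mpre T s' n ε A := Mpre_mono_nat hnN
    _ ≤ levelWeight (s' - s) n * Mpre T s n ε A := Mpre_le_mul hs.le n ε A
    _ ≤ _ := by gcongr; exact hle n

/-! ### Comparison with finitely many centres at each level -/

/-- Index type of the Bowen balls of order `n ≥ N` with centre in the finite set `F n`. -/
abbrev BallIndex (F : ℕ → Finset X) (N : ℕ) : Type _ := {p : ℕ × X // N ≤ p.1 ∧ p.2 ∈ F p.1}

lemma finite_ballIndex (F : ℕ → Finset X) (N m : ℕ) : {i : BallIndex F N | i.1.1 < m}.Finite := by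
  refine Set.Finite.of_finite_image (f := Subtype.val) ?_ Subtype.val_injective.injOn
  refine ((finite_Iio m).biUnion fun n _ => ((F n).finite_toSet.image fun x => (n, x))).subset ?_
  rintro _ ⟨⟨⟨n, x⟩, _, hx⟩, hi, rfl⟩
  exact mem_biUnion (show n ∈ Iio m from hi) ⟨x, hx, rfl⟩

lemma countable_ballIndex (F : ℕ → Finset X) (N : ℕ) : Countable (BallIndex F N) := by
  rw [← Set.countable_univ_iff]
  refine (countable_iUnion fun m => (finite_ballIndex F N m).countable).mono ?_
  exact fun i _ => mem_iUnion.2 ⟨i.1.1 + 1, Nat.lt_succ_self _⟩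

lemma Mpre_le_coverCost [Nonempty X] (F : ℕ → Finset X) (N : ℕ) (ε s : ℝ) (A : Set X) :
    Mpre T s N ε A ≤ coverCost (fun i : BallIndex F N => i.1.1)
      (fun i : BallIndex F N => bowenBall T i.1.2 i.1.1 ε) s A := by
  have := countable_ballIndex F N
  refine le_iInf₂ fun J hJ => ?_
  refine Mpre_le_tsum (fun i : J => i.1.1.2) (fun i : J => i.1.1.1) (fun i => i.1.2.1) ?_
  rwa [biUnion_eq_iUnion] at hJ

lemma coverCost_le_Mpre {F : ℕ → Finset X} {ε : ℝ}
    (hF : ∀ n y, ∃ x ∈ F n, y ∈ bowenBall T x n (ε / 2)) (N : ℕ) (s : ℝ) (A : Set X) :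
    coverCost (fun i : BallIndex F N => i.1.1)
      (fun i : BallIndex F N => bowenBall T i.1.2 i.1.1 ε) s A ≤ Mpre T s N (ε / 2) A := by
  conv_rhs => unfold Mpre
  refine le_iInf fun I => le_iInf fun x => le_iInf fun n => le_iInf fun hn => le_iInf fun hA => ?_
  choose z hzF hz using hF
  let g : I → BallIndex F N := fun i => ⟨(n i, z (n i) (x i)), hn i i.2, hzF _ _⟩
  refine (coverCost_le (range g) ?_).trans ?_
  · rw [biUnion_range]
    rw [biUnion_eq_iUnion] at hA
    exact hA.trans (iUnion_mono fun i => bowenBall_half_subset (hz _ _))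
  · exact ENNReal.tsum_le_tsum_comp_of_surjective (f := rangeFactorization g)
      rangeFactorization_surjective (fun i : range g => levelWeight s i.1.1.1)

lemma exists_finite_centers [CompactSpace X] (hT : Continuous T) {ε : ℝ} (hε : 0 < ε) :
    ∃ F : ℕ → Finset X, ∀ n y, ∃ x ∈ F n, y ∈ bowenBall T x n ε := by
  have : ∀ n, ∃ F : Finset X, ∀ y, ∃ x ∈ F, y ∈ bowenBall T x n ε := by
    intro n
    obtain ⟨F, hF⟩ := CompactSpace.elim_nhds_subcover (fun x => bowenBall T x n ε)
      (fun x => (isOpen_bowenBall hT x n ε).mem_nhds fun k _ => by simpa using hε)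
    refine ⟨F, fun y => ?_⟩
    have hy : y ∈ ⋃ x ∈ F, bowenBall T x n ε := hF ▸ mem_univ y
    simpa using hy
  exact ⟨fun n => (this n).choose, fun n => (this n).choose_spec⟩

end Bowen

/-- **Feng–Huang, Theorem 1.1(ii)**: if `(X,T)` is a topological dynamical system with
finite topological entropy `h_top(T) = h^B_top(T,X) < ∞`, then for every analytic set
`Z ⊆ X`, `h^B_top(T,Z) = sup { h^B_top(T,K) : K ⊆ Z compact }`. -/
theorem bowenEntropy_analytic_eq_iSup_compact
    {X : Type*} [MetricSpace X] [CompactSpace X]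
    (T : X → X) (hT : Continuous T) (hfin : bowenEntropy T Set.univ ≠ ∞)
    (Z : Set X) (hZ : MeasureTheory.AnalyticSet Z) :
    bowenEntropy T Z = ⨆ (K : Set X) (_ : K ⊆ Z) (_ : IsCompact K), bowenEntropy T K := by
  refine le_antisymm ?_ (iSup_le fun K => iSup₂_le fun hK _ => bowenEntropy_mono hK)
  rw [AnalyticSet] at hZ
  rcases hZ with rfl | ⟨f, hf, rfl⟩
  · exact le_iSup_of_le ∅ (le_iSup₂_of_le subset_rfl isCompact_empty le_rfl)
  have : Nonempty X := ⟨f 0⟩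
  refine iSup₂_le fun s hs => ?_
  refine le_of_forall_lt fun a ha => ?_
  -- Two exponents `t < s'` strictly between `a` and `s`.
  have ha' : a.toReal < s := (ENNReal.lt_ofReal_iff_toReal_lt ha.ne_top).1 ha
  obtain ⟨t, hat, hts⟩ := exists_between ha'
  obtain ⟨s', hts', hs's⟩ := exists_between hts
  have hpos : 0 < Mtop T s (range f) := by simp [hs]
  simp only [Mtop, MpreEps, lt_iSup_iff] at hpos
  obtain ⟨ε, hε, N, hpos⟩ := hpos
  obtain ⟨F, hF⟩ := exists_finite_centers hT (half_pos hε)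
  obtain ⟨c, hc0, hc⟩ := exists_between (hpos.trans_le (Mpre_le_coverCost F N ε s (range f)))
  obtain ⟨K, hKZ, hK, hcK⟩ := exists_compact_coverCost (finite_ballIndex F N)
    (fun i => isOpen_bowenBall hT _ _ _) hf hs's hc
  have hMK : 0 < Mpre T s' N (ε / 2) K :=
    (hc0.trans_le hcK).trans_le (coverCost_le_Mpre hF N s' K)
  have htop : Mtop T t K = ∞ := Mtop_eq_top_of_Mpre_pos hts' (half_pos hε) hMK
  calc a < ENNReal.ofReal t := (ENNReal.lt_ofReal_iff_toReal_lt ha.ne_top).2 hat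
    _ ≤ bowenEntropy T K :=
        le_iSup₂ (f := fun (s : ℝ) (_ : Mtop T s K = ∞) => ENNReal.ofReal s) t htop
    _ ≤ ⨆ (_ : K ⊆ range f) (_ : IsCompact K), bowenEntropy T K := by
        rw [iSup_pos hKZ, iSup_pos hK]
    _ ≤ _ := le_iSup (fun K => ⨆ (_ : K ⊆ range f) (_ : IsCompact K), bowenEntropy T K) K
end

section
/- Let (X,T) be a topological dynamical system. For every analytic subset Z ⊆ X, the packing topological entropy of Z equals the supremum of the packing topological entropies of its compact subsets: h^P_top(T,Z) = sup { h^P_top(T,K) : K ⊆ Z, K compact }. -/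
/-!
The inequality `≥` is monotonicity of `Pouter`, which is the outer measure that `PpreEps`
generates.

For `≤`, suppose `Pouter T t ε Z = ∞` and `s < t`; a compact `K ⊆ Z` with
`Pouter T s (ε / 4) K = ∞` is produced by two applications of the Baire category theorem.

* Write `Z = f '' (ℕ → ℕ)` with `f` continuous, and let `Y` be what is left of Baire space after
  removing all basic open sets whose image is `Pouter T t ε`-null. Then `Y` is closed and nonempty,
  and every nonempty relatively open `V ⊆ Y` has `Pouter T t ε (f '' V) ≠ 0`, hence
  `PpreEps T s ε (f '' V) = ∞` because `s < t`.
* In the complete space of nonempty compact subsets of `Y` with the Hausdorff metric, a generic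
  `C` satisfies `PpreEps T s (ε / 2) (f '' (V ∩ C)) = ∞` for each basic open `V` meeting `C`
  (`exists_generic_compact`): adding finitely many nearby points to a compact set makes a packing
  sum large, and small perturbations of these points leave it large, at the cost of reducing the
  radius.
* Put `K = f '' C`. If `K` is covered by sets `A i`, then by Baire's theorem in `C` some
  `closure (A i)` contains `f '' (V ∩ C)` for a basic open `V` meeting `C`. As packing sums of a set
  and of its closure agree up to reducing the radius, `PpreEps T s (ε / 4) (A i) = ∞`.
-/

open Filter Set MeasureTheory Topology
open scoped ENNReal NNReal

/-! ### Packing premeasures and the packing outer measure -/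

section Packing

variable {X : Type*} [MetricSpace X] {T : X → X}

lemma Ppre_mono (s : ℝ) (N : ℕ) (ε : ℝ) {A B : Set X} (h : A ⊆ B) :
    Ppre T s N ε A ≤ Ppre T s N ε B := by
  unfold Ppre
  refine iSup_mono fun I => iSup_mono fun x => iSup_mono fun n => ?_
  refine iSup_le fun h1 => iSup_le fun h2 => ?_
  exact le_iSup₂_of_le (fun i hi => ⟨h (h1 i hi).1, (h1 i hi).2⟩) h2 le_rfl

lemma PpreEps_empty (s ε : ℝ) : PpreEps T s ε (∅ : Set X) = 0 := by
  have h0 : Ppre T s 0 ε (∅ : Set X) = 0 := by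
    unfold Ppre
    simp only [ENNReal.iSup_eq_zero]
    intro I x n h _
    have : IsEmpty I := ⟨fun i => (h i i.2).1⟩
    exact tsum_empty
  exact le_antisymm ((iInf_le _ 0).trans h0.le) bot_le

/-- `Pouter T s ε` as an outer measure. -/
noncomputable def packOuter (T : X → X) (s ε : ℝ) : OuterMeasure X :=
  OuterMeasure.ofFunction (PpreEps T s ε) (PpreEps_empty s ε)

lemma packOuter_apply (s ε : ℝ) (Z : Set X) : packOuter T s ε Z = Pouter T s ε Z := rfl

lemma Pouter_mono (s ε : ℝ) {A B : Set X} (h : A ⊆ B) : Pouter T s ε A ≤ Pouter T s ε B :=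
  measure_mono (μ := packOuter T s ε) h

lemma Pouter_le_PpreEps (s ε : ℝ) (A : Set X) : Pouter T s ε A ≤ PpreEps T s ε A :=
  OuterMeasure.ofFunction_le (m_empty := PpreEps_empty s ε) A

lemma packEntropy_mono {A B : Set X} (h : A ⊆ B) : packEntropy T A ≤ packEntropy T B := by
  refine iSup₂_mono fun ε _ => iSup_mono fun s => iSup_mono' fun hs => ⟨?_, le_rfl⟩
  exact top_le_iff.mp (hs ▸ Pouter_mono s ε h)

lemma sum_le_Ppre {s : ℝ} {N : ℕ} {ε : ℝ} {A : Set X} (F : Finset ℕ) (x : ℕ → X) (n : ℕ → ℕ)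
    (h1 : ∀ i ∈ F, x i ∈ A ∧ N ≤ n i)
    (h2 : ∀ i ∈ F, ∀ j ∈ F, i ≠ j →
      Disjoint (bowenClosedBall T (x i) (n i) ε) (bowenClosedBall T (x j) (n j) ε)) :
    ∑ i ∈ F, ENNReal.ofReal (Real.exp (-s * n i)) ≤ Ppre T s N ε A := by
  unfold Ppre
  refine le_iSup_of_le (F : Set ℕ) (le_iSup_of_le x (le_iSup_of_le n ?_))
  refine le_iSup₂_of_le h1 h2 ?_
  exact (Finset.tsum_subtype' F (fun i => ENNReal.ofReal (Real.exp (-s * n i)))).ge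

lemma exists_finset_of_lt_Ppre {s : ℝ} {N : ℕ} {ε : ℝ} {A : Set X} {M : ℝ≥0∞}
    (h : M < Ppre T s N ε A) :
    ∃ (F : Finset ℕ) (x : ℕ → X) (n : ℕ → ℕ), (∀ i ∈ F, x i ∈ A ∧ N ≤ n i) ∧
      (∀ i ∈ F, ∀ j ∈ F, i ≠ j →
        Disjoint (bowenClosedBall T (x i) (n i) ε) (bowenClosedBall T (x j) (n j) ε)) ∧
      M < ∑ i ∈ F, ENNReal.ofReal (Real.exp (-s * n i)) := by
  unfold Ppre at h
  simp only [lt_iSup_iff] at h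
  obtain ⟨I, x, n, h1, h2, h3⟩ := h
  rw [ENNReal.tsum_eq_iSup_sum, lt_iSup_iff] at h3
  obtain ⟨G, hG⟩ := h3
  have hmem : ∀ i ∈ G.map (Function.Embedding.subtype (· ∈ I)), i ∈ I := by
    intro i hi
    obtain ⟨a, _, rfl⟩ := Finset.mem_map.mp hi
    exact a.2
  refine ⟨G.map (Function.Embedding.subtype (· ∈ I)), x, n, fun i hi => h1 i (hmem i hi),
    fun i hi j hj => h2 i (hmem i hi) j (hmem j hj), ?_⟩
  rw [Finset.sum_map]
  exact hG

/-- Bowen balls of a smaller radius around nearby points are contained in the given ball. -/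
lemma exists_open_bowenClosedBall_subset (hT : Continuous T) (x : X) (n : ℕ) {ε ε' : ℝ}
    (hε : ε' < ε) :
    ∃ U : Set X, IsOpen U ∧ x ∈ U ∧
      ∀ y ∈ U, bowenClosedBall T y n ε' ⊆ bowenClosedBall T x n ε := by
  refine ⟨⋂ k ∈ Set.Iio n, {y | dist (T^[k] x) (T^[k] y) < ε - ε'}, ?_, ?_, ?_⟩
  · exact (Set.finite_Iio n).isOpen_biInter fun k _ =>
      isOpen_lt (continuous_const.dist (hT.iterate k)) continuous_const
  · simp [hε]
  · intro y hy z hz k hk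
    have h1 : dist (T^[k] x) (T^[k] y) < ε - ε' := Set.mem_iInter₂.mp hy k hk
    have h2 := hz k hk
    linarith [dist_triangle (T^[k] x) (T^[k] y) (T^[k] z)]

lemma Ppre_closure_le (hT : Continuous T) (s : ℝ) (N : ℕ) {ε ε' : ℝ} (hε : ε' < ε) (A : Set X) :
    Ppre T s N ε (closure A) ≤ Ppre T s N ε' A := by
  refine le_of_forall_lt fun M hM => ?_
  obtain ⟨F, x, n, h1, h2, h3⟩ := exists_finset_of_lt_Ppre hM
  choose U hU hxU hball using fun i => exists_open_bowenClosedBall_subset hT (x i) (n i) hε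
  have hy : ∀ i, ∃ y, i ∈ F → y ∈ U i ∩ A := fun i => by
    by_cases hi : i ∈ F
    · obtain ⟨y, hy⟩ := mem_closure_iff.mp (h1 i hi).1 (U i) (hU i) (hxU i)
      exact ⟨y, fun _ => hy⟩
    · exact ⟨x i, fun h => absurd h hi⟩
  choose y hy using hy
  refine h3.trans_le (sum_le_Ppre F y n (fun i hi => ⟨(hy i hi).2, (h1 i hi).2⟩) ?_)
  intro i hi j hj hij
  exact (h2 i hi j hj hij).mono (hball i _ (hy i hi).1) (hball j _ (hy j hj).1)

/-- Below an exponent where the packing premeasure is nonzero, it is infinite. -/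
lemma Ppre_eq_top_of_lt {s t ε : ℝ} (hst : s < t) {A : Set X} (h : PpreEps T t ε A ≠ 0) (N : ℕ) :
    Ppre T s N ε A = ∞ := by
  have anti : ∀ {N N' : ℕ}, N ≤ N' → Ppre T s N' ε A ≤ Ppre T s N ε A := by
    intro N N' hN
    unfold Ppre
    refine iSup_mono fun I => iSup_mono fun x => iSup_mono fun n => ?_
    refine iSup_le fun h1 => iSup_le fun h2 => ?_
    exact le_iSup₂_of_le (fun i hi => ⟨(h1 i hi).1, hN.trans (h1 i hi).2⟩) h2 le_rfl
  have key : ∀ L : ℕ, ENNReal.ofReal (Real.exp ((t - s) * L)) * Ppre T t L ε A ≤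
      Ppre T s L ε A := by
    intro L
    unfold Ppre
    simp only [ENNReal.mul_iSup]
    refine iSup_mono fun I => iSup_mono fun x => iSup_mono fun n => ?_
    refine iSup_mono fun h1 => iSup_mono fun h2 => ?_
    rw [← ENNReal.tsum_mul_left]
    refine ENNReal.tsum_le_tsum fun i => ?_
    rw [← ENNReal.ofReal_mul (Real.exp_nonneg _), ← Real.exp_add]
    refine ENNReal.ofReal_le_ofReal (Real.exp_le_exp.mpr ?_)
    have : (L : ℝ) ≤ n i := by exact_mod_cast (h1 i i.2).2
    nlinarith
  have bound : ∀ L : ℕ, N ≤ L →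
      ENNReal.ofReal (Real.exp ((t - s) * L)) * PpreEps T t ε A ≤ Ppre T s N ε A := fun L hL =>
    (mul_le_mul_right (iInf_le _ L) _).trans ((key L).trans (anti hL))
  have lim : Tendsto (fun L : ℕ => ENNReal.ofReal (Real.exp ((t - s) * L)) * PpreEps T t ε A)
      atTop (𝓝 ∞) := by
    have h1 : Tendsto (fun L : ℕ => ENNReal.ofReal (Real.exp ((t - s) * L))) atTop (𝓝 ∞) :=
      ENNReal.tendsto_ofReal_atTop.comp (Real.tendsto_exp_atTop.comp
        (tendsto_natCast_atTop_atTop.const_mul_atTop (sub_pos.mpr hst)))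
    have := ENNReal.Tendsto.mul_const (b := PpreEps T t ε A) h1 (Or.inl ENNReal.top_ne_zero)
    rwa [ENNReal.top_mul h] at this
  exact top_le_iff.mp (le_of_tendsto lim (eventually_atTop.mpr ⟨N, bound⟩))

end Packing

/-! ### Category arguments producing the compact set -/

section Generic

open TopologicalSpace

variable {X : Type*} [MetricSpace X] {T : X → X}

/-- If all packing sums over images of nonempty open sets are infinite, then a generic nonempty
compact set `C` retains this property for its own nonempty relatively open subsets. -/
lemma exists_generic_compact (hT : Continuous T) {Y : Type*} [MetricSpace Y] [CompleteSpace Y]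
    [SecondCountableTopology Y] [Nonempty Y] {f : Y → X} (hf : Continuous f)
    {s ε ε' : ℝ} (hε : ε' < ε)
    (H : ∀ V : Set Y, IsOpen V → V.Nonempty → ∀ N, Ppre T s N ε (f '' V) = ∞) :
    ∃ C : NonemptyCompacts Y, ∀ V : Set Y, IsOpen V → ((C : Set Y) ∩ V).Nonempty →
      ∀ N, Ppre T s N ε' (f '' (V ∩ C)) = ∞ := by
  let good : (countableBasis Y) × ℕ × ℕ → Set (NonemptyCompacts Y) := fun p =>
    {C | ((C : Set Y) ∩ p.1).Nonempty → (p.2.2 : ℝ≥0∞) ≤ Ppre T s p.2.1 ε' (f '' (p.1 ∩ C))}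
  have hdense : ∀ p, Dense (interior (good p)) := by
    rintro ⟨⟨V, hVb⟩, N, M⟩
    have hV : IsOpen V := isOpen_of_mem_countableBasis hVb
    rw [dense_iff_inter_open]
    intro O hO hOne
    by_cases hmeet : ∃ C ∈ O, ((C : Set Y) ∩ V).Nonempty
    swap
    · obtain ⟨C, hC⟩ := hOne
      refine ⟨C, hC, mem_interior.mpr ⟨O, fun D hD hne => ?_, hO, hC⟩⟩
      exact absurd ⟨D, hD, hne⟩ hmeet
    obtain ⟨C, hCO, p, hpC, hpV⟩ := hmeet
    obtain ⟨δ, hδ, hball⟩ := EMetric.isOpen_iff.mp hO C hCO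
    obtain ⟨δ', hδ', hδδ⟩ := exists_between hδ
    -- a large packing with centres in `V` close to `p`
    have hW : IsOpen (V ∩ Metric.eball p δ') := hV.inter Metric.isOpen_eball
    have hbig := H _ hW ⟨p, hpV, Metric.mem_eball_self hδ'⟩ N
    obtain ⟨F, x, n, h1, h2, h3⟩ :=
      exists_finset_of_lt_Ppre (M := M) (hbig ▸ ENNReal.natCast_lt_top M)
    have hq : ∀ i, ∃ q, q ∈ V ∩ Metric.eball p δ' ∧ (i ∈ F → f q = x i) := fun i => by
      by_cases hi : i ∈ F
      · obtain ⟨q, hq, hqx⟩ := (h1 i hi).1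
        exact ⟨q, hq, fun _ => hqx⟩
      · exact ⟨p, ⟨hpV, Metric.mem_eball_self hδ'⟩, fun h => absurd h hi⟩
    choose q hq hqx using hq
    have hcomp : IsCompact ((C : Set Y) ∪ q '' F) :=
      C.isCompact.union (F.finite_toSet.image q).isCompact
    let D : NonemptyCompacts Y := ⟨⟨_, hcomp⟩, C.nonempty.mono subset_union_left⟩
    have hDcoe : (D : Set Y) = (C : Set Y) ∪ q '' F := rfl
    have hDO : D ∈ O := by
      refine hball ?_
      rw [Metric.mem_eball]
      refine lt_of_le_of_lt ?_ hδδ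
      refine Metric.hausdorffEDist_le_of_mem_edist ?_ ?_
      · rintro y (hy | ⟨i, _, rfl⟩)
        · exact ⟨y, hy, by simp⟩
        · exact ⟨p, hpC, (Metric.mem_eball.mp (hq i).2).le⟩
      · intro y hy
        exact ⟨y, Or.inl hy, by simp⟩
    choose U hU hxU hUball using fun i => exists_open_bowenClosedBall_subset hT (x i) (n i) hε
    -- any compact set meeting all these neighbourhoods carries the perturbed packing
    let Q : Set (NonemptyCompacts Y) :=
      ⋂ i ∈ F, {E | ((E : Set Y) ∩ (V ∩ f ⁻¹' U i)).Nonempty}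
    have hQ : IsOpen Q := isOpen_biInter_finset fun i _ =>
      NonemptyCompacts.isOpen_inter_nonempty_of_isOpen (hV.inter ((hU i).preimage hf))
    refine ⟨D, hDO, mem_interior.mpr ⟨Q, ?_, hQ, ?_⟩⟩
    · intro E hE _
      have hE' : ∀ i, ∃ z, i ∈ F → z ∈ (E : Set Y) ∩ (V ∩ f ⁻¹' U i) := fun i => by
        by_cases hi : i ∈ F
        · obtain ⟨z, hz⟩ := Set.mem_iInter₂.mp hE i hi
          exact ⟨z, fun _ => hz⟩
        · exact ⟨p, fun h => absurd h hi⟩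
      choose z hz using hE'
      refine h3.le.trans (sum_le_Ppre F (fun i => f (z i)) n (fun i hi => ⟨?_, (h1 i hi).2⟩) ?_)
      · exact ⟨z i, ⟨(hz i hi).2.1, (hz i hi).1⟩, rfl⟩
      · intro i hi j hj hij
        exact (h2 i hi j hj hij).mono (hUball i _ (hz i hi).2.2) (hUball j _ (hz j hj).2.2)
    · refine Set.mem_iInter₂.mpr fun i hi => ⟨q i, Or.inr ⟨i, hi, rfl⟩, (hq i).1, ?_⟩
      change f (q i) ∈ U i
      rw [hqx i hi]
      exact hxU i
  have : Countable (countableBasis Y) := (countable_countableBasis Y).to_subtype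
  obtain ⟨C, hC⟩ := (dense_iInter_of_isOpen (fun p => isOpen_interior) hdense).nonempty
  refine ⟨C, fun V hV ⟨p, hpC, hpV⟩ N => ?_⟩
  obtain ⟨B, hB, hpB, hBV⟩ := (isBasis_countableBasis Y).exists_subset_of_mem_open hpV hV
  refine ENNReal.eq_top_of_forall_nnreal_le fun r => ?_
  obtain ⟨M, hM⟩ := exists_nat_ge r
  have hr : (r : ℝ≥0∞) ≤ (M : ℝ≥0∞) := by exact_mod_cast hM
  have hg := interior_subset (Set.mem_iInter.mp hC (⟨B, hB⟩, N, M)) ⟨p, hpC, hpB⟩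
  exact hr.trans (hg.trans (Ppre_mono _ _ _ (image_mono (inter_subset_inter_left _ hBV))))

/-- Deleting from a second countable space all open sets with null image leaves a closed set in
which every nonempty relatively open subset has non-null image. -/
lemma exists_closed_nowhere_null {Y W : Type*} [TopologicalSpace Y] [SecondCountableTopology Y]
    (μ : OuterMeasure W) (f : Y → W) (h : μ (range f) ≠ 0) :
    ∃ S : Set Y, IsClosed S ∧ S.Nonempty ∧
      ∀ V : Set Y, IsOpen V → (V ∩ S).Nonempty → μ (f '' (V ∩ S)) ≠ 0 := by
  let 𝒩 : Set (Set Y) := {B | B ∈ countableBasis Y ∧ μ (f '' B) = 0}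
  have hcount : 𝒩.Countable := (countable_countableBasis Y).mono fun B hB => hB.1
  have hnull : μ (f '' ⋃₀ 𝒩) = 0 := by
    rw [sUnion_eq_biUnion, image_iUnion₂]
    exact (measure_biUnion_null_iff hcount).mpr fun B hB => hB.2
  refine ⟨(⋃₀ 𝒩)ᶜ, ?_, ?_, ?_⟩
  · exact (isOpen_sUnion fun B hB => isOpen_of_mem_countableBasis hB.1).isClosed_compl
  · by_contra hne
    rw [not_nonempty_iff_eq_empty, compl_empty_iff] at hne
    rw [hne, image_univ] at hnull
    exact h hnull
  · rintro V hV ⟨p, hpV, hpS⟩ h0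
    obtain ⟨B, hB, hpB, hBV⟩ := (isBasis_countableBasis Y).exists_subset_of_mem_open hpV hV
    refine hpS ⟨B, ⟨hB, ?_⟩, hpB⟩
    refine measure_mono_null ?_ (measure_union_null h0 hnull)
    rintro _ ⟨y, hy, rfl⟩
    by_cases hyS : y ∈ ⋃₀ 𝒩
    · exact Or.inr ⟨y, hyS, rfl⟩
    · exact Or.inl ⟨y, ⟨hBV hy, hyS⟩, rfl⟩

/-- An analytic set with nonzero packing measure contains a compact set whose packing measure at
any smaller exponent, with the radius reduced, is infinite. -/
lemma exists_compact_Pouter_eq_top (hT : Continuous T) {Z : Set X} (hZ : AnalyticSet Z)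
    {s t ε : ℝ} (hst : s < t) (hε : 0 < ε) (h : Pouter T t ε Z ≠ 0) :
    ∃ K ⊆ Z, IsCompact K ∧ Pouter T s (ε / 4) K = ∞ := by
  rw [AnalyticSet] at hZ
  rcases hZ with rfl | ⟨g, hg, rfl⟩
  · exact absurd (measure_empty (μ := packOuter T t ε)) h
  obtain ⟨S, hSc, hSne, hS⟩ := exists_closed_nowhere_null (packOuter T t ε) g h
  have : PolishSpace S := hSc.polishSpace
  let _ := upgradeIsCompletelyMetrizable S
  have : Nonempty S := hSne.to_subtype
  let f : S → X := fun y => g y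
  have hf : Continuous f := hg.comp continuous_subtype_val
  have H : ∀ V : Set S, IsOpen V → V.Nonempty → ∀ N, Ppre T s N ε (f '' V) = ∞ := by
    intro V hV hne N
    refine Ppre_eq_top_of_lt hst (fun h0 => ?_) N
    obtain ⟨W, hW, rfl⟩ := isOpen_induced_iff.mp hV
    obtain ⟨y, hy⟩ := hne
    have himg : f '' (Subtype.val ⁻¹' W) = g '' (W ∩ S) := by
      rw [inter_comm, ← Subtype.image_preimage_coe, image_image]
    refine hS W hW ⟨y, hy, y.2⟩ ?_
    rw [← himg]
    exact le_antisymm ((Pouter_le_PpreEps t ε _).trans h0.le) bot_le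
  obtain ⟨C, hC⟩ := exists_generic_compact hT hf (half_lt_self hε) H
  refine ⟨f '' C, ?_, C.isCompact.image hf, ?_⟩
  · rintro _ ⟨y, _, rfl⟩
    exact mem_range_self _
  refine top_le_iff.mp (le_iInf₂ fun A hA => ?_)
  have : CompactSpace (C : Set S) := isCompact_iff_compactSpace.mp C.isCompact
  have : Nonempty (C : Set S) := C.nonempty.to_subtype
  obtain ⟨i, c, hc⟩ := nonempty_interior_of_iUnion_of_closed
    (f := fun i => {c : (C : Set S) | f c ∈ closure (A i)})
    (fun i => isClosed_closure.preimage (hf.comp continuous_subtype_val))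
    (eq_univ_of_forall fun c => by
      obtain ⟨i, hi⟩ := mem_iUnion.mp (hA ⟨c, c.2, rfl⟩)
      exact mem_iUnion.mpr ⟨i, subset_closure hi⟩)
  obtain ⟨V, hV, hVeq⟩ := isOpen_induced_iff.mp
    (isOpen_interior (s := {c : (C : Set S) | f c ∈ closure (A i)}))
  have hcV : (c : S) ∈ V := by
    have : c ∈ Subtype.val ⁻¹' V := hVeq ▸ hc
    exact this
  have hsub : f '' (V ∩ C) ⊆ closure (A i) := by
    rintro _ ⟨y, ⟨hyV, hyC⟩, rfl⟩
    have hy : (⟨y, hyC⟩ : (C : Set S)) ∈ Subtype.val ⁻¹' V := hyV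
    rw [hVeq] at hy
    have hy' := interior_subset hy
    exact hy'
  have hi : PpreEps T s (ε / 4) (A i) = ∞ := by
    refine iInf_eq_top.mpr fun N => top_le_iff.mp ?_
    rw [← hC V hV ⟨c, c.2, hcV⟩ N]
    exact (Ppre_mono _ _ _ hsub).trans (Ppre_closure_le hT s N (by linarith) (A i))
  exact hi ▸ ENNReal.le_tsum i

end Generic

/-- **Feng–Huang, Theorem 1.3(ii)**: for a topological dynamical system `(X,T)` and any
analytic set `Z ⊆ X`, `h^P_top(T,Z) = sup { h^P_top(T,K) : K ⊆ Z compact }`. -/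
theorem packEntropy_analytic_eq_iSup_compact
    {X : Type*} [MetricSpace X] [CompactSpace X]
    (T : X → X) (hT : Continuous T)
    (Z : Set X) (hZ : MeasureTheory.AnalyticSet Z) :
    packEntropy T Z = ⨆ (K : Set X) (_ : K ⊆ Z) (_ : IsCompact K), packEntropy T K := by
  apply le_antisymm
  · refine iSup₂_le fun ε hε => iSup₂_le fun t ht => ?_
    have hlt : ∀ s < t, ENNReal.ofReal s ≤
        ⨆ (K : Set X) (_ : K ⊆ Z) (_ : IsCompact K), packEntropy T K := by
      intro s hst
      obtain ⟨K, hKZ, hK, hP⟩ :=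
        exists_compact_Pouter_eq_top hT hZ hst hε (ht ▸ ENNReal.top_ne_zero)
      refine le_iSup_of_le K (le_iSup₂_of_le hKZ hK ?_)
      refine le_iSup₂_of_le (ε / 4) (by positivity) ?_
      exact le_iSup₂_of_le (f := fun s (_ : Pouter T s (ε / 4) K = ∞) => ENNReal.ofReal s)
        s hP le_rfl
    have hlim : Tendsto ENNReal.ofReal (𝓝[<] t) (𝓝 (ENNReal.ofReal t)) :=
      ENNReal.continuous_ofReal.continuousAt.tendsto.mono_left nhdsWithin_le_nhds
    exact le_of_tendsto hlim (eventually_nhdsWithin_of_forall hlt)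
  · exact iSup_le fun K => iSup₂_le fun hK _ => packEntropy_mono hK
end
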